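/- Let n ≥ 1, 1 < p < ∞, 0 < s < 1, 0 ≤ α < min{Q−2, p(1−s)}, R₀ > 0, and −1/(p−1) < β < (sp+α)/(p−1). Let ψ be a smooth function with compact support in D_{R₀+1,t} = {ξ : |x_i| ≤ R₀+1, |y_i| ≤ R₀+1 for all i, |t| ≤ (R₀+1)² + (R₀+1)}, with 0 ≤ ψ ≤ 1, ψ ≡ 1 on D_{R₀} = {ξ : |x_i| ≤ R₀, |y_i| ≤ R₀ for all i, |t| ≤ R₀²}, |∂ψ/∂x_i|, |∂ψ/∂y_i| ≤ C₀ and |∂ψ/∂t| ≤ C₀/(R₀+1) for some C₀ > 0, and set u_{β,R₀}(ξ) = ((x₁)₊)^β ψ(ξ). Then u_{β,R₀} is a weak supersolution of 𝓛u = λ J_p(u)/x₁^{sp+α} in D_{R₀} ∩ ℍⁿ₊ with λ = C_{n,s,p,α} · λ(β, s+α/p, p): that is, for every nonnegative φ ∈ W^{s,p,α}(ℍⁿ) with compact support contained in D_{R₀} ∩ ℍⁿ₊, ∫_{ℍⁿ}∫_{ℍⁿ} J_p(u_{β,R₀}(ξ) − u_{β,R₀}(ξ')) (φ(ξ) − φ(ξ'))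 / (d(ξ⁻¹∘ξ')^{Q+sp} |z−z'|^α) dξ' dξ ≥ C_{n,s,p,α} λ(β, s+α/p, p) ∫_{ℍⁿ₊} J_p(u_{β,R₀}(ξ)) φ(ξ) / x₁^{sp+α} dξ. Here C_{n,s,p,α} = 2|S^{2n−2}| (∫₀^∞ (1+t²)^{−(Q+sp)/4} dt)(∫₀^∞ r^{Q−4}(1+r²)^{−(Q−2+sp+α)/2} dr), and λ(β, s+α/p, p) = 2∫₀¹ J_p(1−τ^β)(1 − τ^{sp+α−1−β(p−1)})/(1−τ)^{1+sp+α} dτ + 2/(sp+α). -/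

import Mathlib

/-!
Write `U(ξ) = (x₁₊)^β`. Since `0 ≤ ψ ≤ 1`, one has `u ≤ U` everywhere, with equality on the support
of `φ`, and `J_p` is increasing. Hence, once the two terms of `φ(ξ) - φ(ξ')` have been separated by
symmetry, replacing `u` by `U` only decreases the form, and what remains is a computation for a
function of `x₁` alone: integrating the kernel over every variable but `x₁` leaves
`C_{n,s,p,α} |x₁ - x₁'|^{-(1+sp+α)}` (`kern_marginal_at`), and the resulting one-dimensional integral
is `x₁^{β(p-1)-(sp+α)}` times a constant, by scaling.

Separating the two terms is not legitimate directly, as the one-dimensional integral in general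
converges only as a principal value. Everything is therefore done on the set `trunc ρ` of pairs of
heights whose ratio is not in `(ρ, 1/ρ)`: it is symmetric and invariant under dilations, so the
symmetrization (`chi_mul_wform`), the comparison and the scaling all survive (`truncated_le`). The
substitution `b ↦ 1/b` maps the part above the diagonal onto `(0, ρ)`, where the two parts combine
into the integrand of `λ(β, s+α/p, p)`, which is integrable up to `1` (`ker1_tendsto`).

The limit `ρ → 1` in the full form is dominated convergence (`core_le`), and needs the integrability
of the form (`integrable_wform`). Off the truncated diagonal it follows from the same marginal
formula. Near the diagonal both heights are bounded away from `0`, so `u` is Lipschitz for the gauge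
(`near_bound`) and has finite `p`-energy because `sp + α < p` (`integrable_near`); the energy of `φ`
is finite by assumption.
-/

open MeasureTheory Real Filter Topology ENNReal

noncomputable section

/-- The Heisenberg group `ℍⁿ` as `ℝⁿ × ℝⁿ × ℝ`. -/
abbrev Heis (n : ℕ) : Type := (Fin n → ℝ) × (Fin n → ℝ) × ℝ

/-- Group law `ξ ∘ ξ' = (x+x', y+y', t+t'+2⟨y,x'⟩−2⟨x,y'⟩)`. -/
def Hmul {n : ℕ} (a b : Heis n) : Heis n :=
  (a.1 + b.1, a.2.1 + b.2.1,
    a.2.2 + b.2.2 + 2 * (∑ i, a.2.1 i * b.1 i) - 2 * (∑ i, a.1 i * b.2.1 i))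

/-- Group inverse `ξ⁻¹ = −ξ`. -/
def Hinv {n : ℕ} (a : Heis n) : Heis n := (-a.1, -a.2.1, -a.2.2)

/-- Squared Euclidean norm of the horizontal part `z = (x,y) ∈ ℝ^{2n}`. -/
def zsq {n : ℕ} (a : Heis n) : ℝ := (∑ i, (a.1 i) ^ 2) + (∑ i, (a.2.1 i) ^ 2)

/-- Euclidean norm `|z|` of the horizontal part. -/
def znorm {n : ℕ} (a : Heis n) : ℝ := Real.sqrt (zsq a)

/-- The Koranyi–Folland gauge `d(ξ) = (|z|⁴ + t²)^{1/4}`. -/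
def hd {n : ℕ} (a : Heis n) : ℝ := ((zsq a) ^ 2 + (a.2.2) ^ 2) ^ ((1 : ℝ) / 4)

/-- Homogeneous dimension `Q = 2n + 2` (as a real number). -/
def hQ (n : ℕ) : ℝ := 2 * n + 2

/-- First coordinate `x₁` of a point of `ℍⁿ`. -/
def x1 {n : ℕ} (a : Heis n) : ℝ := if h : 0 < n then a.1 ⟨0, h⟩ else 0

/-- The half-space `ℍⁿ₊ = {ξ : x₁ > 0}`. -/
def halfSpace (n : ℕ) : Set (Heis n) := {a | 0 < x1 a}

/-- Euclidean distance `|z - z'|` of the horizontal parts. -/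
def zdist {n : ℕ} (a b : Heis n) : ℝ := znorm (Hmul (Hinv a) b)

/-- `J_p(t) = |t|^{p-2} t`. -/
def Jp (p t : ℝ) : ℝ := |t| ^ (p - 2) * t

/-- The Gagliardo-type seminorm (to the `p`-th power)
`[f]_{s,p,α,Ω}^p = ∫_Ω ∫_Ω |f(ξ)-f(ξ')|^p / (d(ξ⁻¹∘ξ')^{Q+sp} |z-z'|^α)`. -/
def gagSem {n : ℕ} (p s α : ℝ) (Ω : Set (Heis n)) (f : Heis n → ℝ) : ℝ≥0∞ :=
  ∫⁻ ξ in Ω, ∫⁻ ξ' in Ω, ENNReal.ofReal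
    (|f ξ - f ξ'| ^ p / (hd (Hmul (Hinv ξ) ξ') ^ (hQ n + s * p) * zdist ξ ξ' ^ α))

/-- The seminorm for `α = 0` (no horizontal weight). -/
def gagSem0 {n : ℕ} (p s : ℝ) (Ω : Set (Heis n)) (f : Heis n → ℝ) : ℝ≥0∞ :=
  ∫⁻ ξ in Ω, ∫⁻ ξ' in Ω, ENNReal.ofReal
    (|f ξ - f ξ'| ^ p / hd (Hmul (Hinv ξ) ξ') ^ (hQ n + s * p))

/-- The strip `𝒟_{r,R} = {ξ : r < x₁ < R}`. -/
def strip (n : ℕ) (r R : ℝ) : Set (Heis n) := {ξ | r < x1 ξ ∧ x1 ξ < R}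

/-- `f ∈ W^{s,p,α}_{loc(x₁)}(ℍⁿ₊)`. -/
def MemWlocx1 (n : ℕ) (p s α : ℝ) (f : Heis n → ℝ) : Prop :=
  Measurable f ∧ ∀ r R : ℝ, 0 < r → r < R →
    (∫⁻ ξ in strip n r R, ENNReal.ofReal (|f ξ| ^ p)) < ⊤ ∧
    gagSem p s α (strip n r R) f < ⊤

/-- `f ∈ L^{p-1}_{sp,α}(ℍⁿ)`. -/
def MemLsp (n : ℕ) (p s α : ℝ) (f : Heis n → ℝ) : Prop :=
  Measurable f ∧
  (∀ K : Set (Heis n), IsCompact K →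
    (∫⁻ ξ in K, ENNReal.ofReal (|f ξ| ^ (p - 1))) < ⊤) ∧
  (∫⁻ ξ, ENNReal.ofReal (|f ξ| ^ (p - 1) /
      ((1 + hd ξ) ^ (hQ n + s * p) * (1 + znorm ξ) ^ α))) < ⊤

/-- `φ ∈ W^{s,p,α}(Ω)`. -/
def MemW (n : ℕ) (p s α : ℝ) (Ω : Set (Heis n)) (φ : Heis n → ℝ) : Prop :=
  Measurable φ ∧ (∫⁻ ξ in Ω, ENNReal.ofReal (|φ ξ| ^ p)) < ⊤ ∧ gagSem p s α Ω φ < ⊤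

/-- `φ ∈ W^{s,p}(Ω)` (the case `α = 0`). -/
def MemW0 (n : ℕ) (p s : ℝ) (Ω : Set (Heis n)) (φ : Heis n → ℝ) : Prop :=
  Measurable φ ∧ (∫⁻ ξ in Ω, ENNReal.ofReal (|φ ξ| ^ p)) < ⊤ ∧ gagSem0 p s Ω φ < ⊤

/-- `f ∈ W^{s,p}_{loc}(ℍⁿ₊)`. -/
def MemWloc0 (n : ℕ) (p s : ℝ) (f : Heis n → ℝ) : Prop :=
  Measurable f ∧ ∀ K : Set (Heis n), IsCompact K → K ⊆ halfSpace n →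
    (∫⁻ ξ in K, ENNReal.ofReal (|f ξ| ^ p)) < ⊤ ∧ gagSem0 p s K f < ⊤

/-- `f ∈ L^{p-1}_{sp}(ℍⁿ)`. -/
def MemLsp0 (n : ℕ) (p s : ℝ) (f : Heis n → ℝ) : Prop :=
  Measurable f ∧
  (∀ K : Set (Heis n), IsCompact K →
    (∫⁻ ξ in K, ENNReal.ofReal (|f ξ| ^ (p - 1))) < ⊤) ∧
  (∫⁻ ξ, ENNReal.ofReal (|f ξ| ^ (p - 1) / (1 + hd ξ) ^ (hQ n + s * p))) < ⊤

/-- Surface measure of the unit sphere `S^{m-1} ⊂ ℝ^m`: `|S^{m-1}| = 2π^{m/2}/Γ(m/2)`. -/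
def sphereArea (m : ℕ) : ℝ := 2 * Real.pi ^ ((m : ℝ) / 2) / Real.Gamma ((m : ℝ) / 2)

/-- `ℐ(k,θ,α) = (∫₀^∞ (1+t²)^{-(k+2+θ)/4} dt) (∫₀^∞ r^{k-2}(1+r²)^{-(k+θ+α)/2} dr)`. -/
def calI (k : ℕ) (θ α : ℝ) : ℝ :=
  (∫ t in Set.Ioi (0 : ℝ), (1 + t ^ 2) ^ (-(((k : ℝ) + 2 + θ) / 4))) *
  (∫ r in Set.Ioi (0 : ℝ), r ^ ((k : ℝ) - 2) * (1 + r ^ 2) ^ (-(((k : ℝ) + θ + α) / 2)))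

/-- `Λ_{s,p,α} = 2∫₀¹ |1-τ^{(sp+α-1)/p}|^p/(1-τ)^{1+sp+α} dτ + 2/(sp+α)`. -/
def LamC (s p α : ℝ) : ℝ :=
  2 * (∫ τ in Set.Ioo (0 : ℝ) 1,
      |1 - τ ^ ((s * p + α - 1) / p)| ^ p / (1 - τ) ^ (1 + s * p + α)) + 2 / (s * p + α)

/-- `u_β(τ) = τ^β` for `τ > 0`, extended by `0`. -/
def ubeta (β τ : ℝ) : ℝ := if 0 < τ then τ ^ β else 0

/-- `λ(β,s,p)`. -/
def lam (p s β : ℝ) : ℝ :=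
  2 * (∫ τ in Set.Ioo (0 : ℝ) 1,
      Jp p (1 - τ ^ β) * (1 - τ ^ (s * p - 1 - β * (p - 1))) / (1 - τ) ^ (1 + s * p)) +
  2 / (s * p)

/-- `λ_ε(β,s,p)`. -/
def lamEps (p s β ε : ℝ) : ℝ :=
  2 * (∫ τ in Set.Ioo (0 : ℝ) (1 / (1 + ε)), Jp p (1 - τ ^ β) / |1 - τ| ^ (1 + s * p)) +
  2 * (∫ τ in Set.Ioi (1 + ε), Jp p (1 - τ ^ β) / |1 - τ| ^ (1 + s * p)) +
  2 / (s * p)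

/-- The box `D_{R₀}`. -/
def boxD (n : ℕ) (R₀ : ℝ) : Set (Heis n) :=
  {ξ | (∀ i, |ξ.1 i| ≤ R₀) ∧ (∀ i, |ξ.2.1 i| ≤ R₀) ∧ |ξ.2.2| ≤ R₀ ^ 2}

/-- The box `D_{R₀,t}`. -/
def boxDt (n : ℕ) (R₀ : ℝ) : Set (Heis n) :=
  {ξ | (∀ i, |ξ.1 i| ≤ R₀) ∧ (∀ i, |ξ.2.1 i| ≤ R₀) ∧ |ξ.2.2| ≤ R₀ ^ 2 + R₀}

/-- `λ(β,S,p)` as in the paper, for a general fractional parameter `S`. -/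
def lamGen (p S β : ℝ) : ℝ :=
  2 * (∫ τ in Set.Ioo (0 : ℝ) 1,
      Jp p (1 - τ ^ β) * (1 - τ ^ (S * p - 1 - β * (p - 1))) / (1 - τ) ^ (1 + S * p)) +
  2 / (S * p)

/-! ### Marginal of the kernel -/

/-- Scaling: the integral of `(a² + |w|²)^{-γ}` is a power of `a` times its value at `a = 1`. -/
lemma jap_lintegral {E : Type*} [NormedAddCommGroup E] [InnerProductSpace ℝ E]
    [FiniteDimensional ℝ E] [MeasurableSpace E] [BorelSpace E] {γ : ℝ}
    (hγ : (Module.finrank ℝ E : ℝ) < 2 * γ) {a : ℝ} (ha : 0 < a) :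
    ∫⁻ w : E, ENNReal.ofReal ((a ^ 2 + ‖w‖ ^ 2) ^ (-γ)) =
      ENNReal.ofReal (a ^ ((Module.finrank ℝ E : ℝ) - 2 * γ) *
        ∫ w : E, (1 + ‖w‖ ^ 2) ^ (-γ)) := by
  have key : ∀ v : E, (a ^ 2 + ‖a • v‖ ^ 2) ^ (-γ) = a ^ (-(2 * γ)) * (1 + ‖v‖ ^ 2) ^ (-γ) := by
    intro v
    rw [norm_smul, Real.norm_eq_abs, mul_pow, sq_abs,
      show a ^ 2 + a ^ 2 * ‖v‖ ^ 2 = a ^ 2 * (1 + ‖v‖ ^ 2) by ring,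
      Real.mul_rpow (by positivity) (by positivity), ← Real.rpow_natCast, ← Real.rpow_mul ha.le]
    congr 2
    push_cast; ring
  have hint : Integrable (fun w : E => (1 + ‖w‖ ^ 2) ^ (-γ)) := by
    have := integrable_rpow_neg_one_add_norm_sq (E := E) (μ := volume) hγ
    rwa [show -(2 * γ) / 2 = -γ by ring] at this
  have hint2 : Integrable (fun w : E => (a ^ 2 + ‖w‖ ^ 2) ^ (-γ)) := by
    rw [← integrable_comp_smul_iff volume _ ha.ne']
    simp_rw [key]
    exact hint.const_mul _
  have hI := Measure.integral_comp_smul (volume : Measure E)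
    (fun w : E => (a ^ 2 + ‖w‖ ^ 2) ^ (-γ)) a
  simp_rw [key] at hI
  rw [integral_const_mul, smul_eq_mul, abs_of_pos (by positivity)] at hI
  rw [← ofReal_integral_eq_lintegral_ofReal hint2 (ae_of_all _ fun w => by positivity)]
  congr 1
  rw [Real.rpow_sub ha, Real.rpow_natCast, div_mul_eq_mul_div, mul_div_assoc,
    div_eq_inv_mul, ← Real.rpow_neg ha.le, hI]
  field_simp

lemma t_lintegral {b Z : ℝ} (hb : 1 < 2 * b) (hZ : 0 < Z) :
    ∫⁻ t : ℝ, ENNReal.ofReal ((Z ^ 2 + t ^ 2) ^ (-b)) =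
      ENNReal.ofReal (Z ^ (1 - 2 * b) *
        (2 * ∫ t in Set.Ioi (0 : ℝ), (1 + t ^ 2) ^ (-b))) := by
  have h := jap_lintegral (E := ℝ) (γ := b) (by simpa using hb) hZ
  simp only [Module.finrank_self, Nat.cast_one, Real.norm_eq_abs] at h
  rw [integral_comp_abs (f := fun t => (1 + t ^ 2) ^ (-b))] at h
  simpa using h

/-- `jap_lintegral` in polar coordinates. -/
lemma w_lintegral {ι : Type*} [Fintype ι] [Nonempty ι] {γ a : ℝ}
    (hγ : (Fintype.card ι : ℝ) < 2 * γ) (ha : 0 < a) :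
    ∫⁻ w : EuclideanSpace ℝ ι, ENNReal.ofReal ((a ^ 2 + ‖w‖ ^ 2) ^ (-γ)) =
      ENNReal.ofReal (a ^ ((Fintype.card ι : ℝ) - 2 * γ) *
        (sphereArea (Fintype.card ι) *
          ∫ r in Set.Ioi (0 : ℝ), r ^ ((Fintype.card ι : ℝ) - 1) * (1 + r ^ 2) ^ (-γ))) := by
  have h := jap_lintegral (E := EuclideanSpace ℝ ι) (γ := γ) (by simpa using hγ) ha
  rw [integral_fun_norm_addHaar volume (fun r => (1 + r ^ 2) ^ (-γ))] at h
  rw [h, finrank_euclideanSpace]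
  have hc : 0 < Fintype.card ι := Fintype.card_pos
  congr 3
  have hb : (volume : Measure (EuclideanSpace ℝ ι)).real (Metric.ball 0 1) =
      √π ^ Fintype.card ι / Real.Gamma (Fintype.card ι / 2 + 1) := by
    rw [Measure.real, EuclideanSpace.volume_ball]
    simp only [ENNReal.ofReal_one, one_pow, one_mul]
    rw [ENNReal.toReal_ofReal]
    have : 0 < Real.Gamma ((Fintype.card ι : ℝ) / 2 + 1) := Real.Gamma_pos_of_pos (by positivity)
    positivity
  rw [hb, nsmul_eq_mul, smul_eq_mul, ← mul_assoc]
  congr 1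
  · have hG : 0 < Real.Gamma ((Fintype.card ι : ℝ) / 2) := Real.Gamma_pos_of_pos (by positivity)
    rw [sphereArea, Real.Gamma_add_one (by positivity), Real.sqrt_eq_rpow, ← Real.rpow_natCast,
      ← Real.rpow_mul Real.pi_pos.le]
    field_simp
  · apply setIntegral_congr_fun measurableSet_Ioi
    intro r hr
    simp only [smul_eq_mul]
    rw [← Real.rpow_natCast, Nat.cast_sub hc]
    simp

/-- A function of `x₁` times a function of `|z|²`: the remaining `2n - 1` horizontal variables are
regrouped into one Euclidean space, of dimension `m + (m + 1)` when `n = m + 1`. -/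
lemma split_lintegral (m : ℕ) (f : ℝ → ℝ≥0∞) (hf : Measurable f) (Φ : ℝ → ℝ≥0∞)
    (hΦ : Measurable Φ) :
    ∫⁻ x : Fin (m + 1) → ℝ, ∫⁻ y : Fin (m + 1) → ℝ,
        f (x 0) * Φ ((∑ i, x i ^ 2) + ∑ i, y i ^ 2) =
      ∫⁻ a : ℝ, f a * ∫⁻ w : EuclideanSpace ℝ (Fin m ⊕ Fin (m + 1)), Φ (a ^ 2 + ‖w‖ ^ 2) := by
  have h1 := (volume_preserving_piFinSuccAbove (fun _ : Fin (m + 1) => ℝ) 0).symm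
  rw [← h1.lintegral_comp (by fun_prop), Measure.volume_eq_prod, lintegral_prod _ (by fun_prop)]
  congr 1; ext a
  have h2 := PiLp.volume_preserving_toLp (Fin m ⊕ Fin (m + 1))
  rw [← h2.lintegral_comp (by fun_prop)]
  have h3 := volume_measurePreserving_sumPiEquivProdPi_symm (fun _ : Fin m ⊕ Fin (m + 1) => ℝ)
  rw [← h3.lintegral_comp (by fun_prop), Measure.volume_eq_prod, lintegral_prod _ (by fun_prop),
    ← lintegral_const_mul _ (Measurable.lintegral_prod_right' (f := fun q : (Fin m → ℝ) ×
      (Fin (m + 1) → ℝ) => Φ (a ^ 2 + ‖WithLp.toLp 2 ((MeasurableEquiv.sumPiEquivProdPi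
        fun _ : Fin m ⊕ Fin (m + 1) => ℝ).symm q)‖ ^ 2)) (by fun_prop))]
  congr 1; ext x
  rw [← lintegral_const_mul _ (by fun_prop)]
  congr 1; ext y
  simp [EuclideanSpace.norm_sq_eq, Fin.sum_univ_succ, Fin.insertNthEquiv,
    MeasurableEquiv.piFinSuccAbove, MeasurableEquiv.sumPiEquivProdPi, Equiv.sumPiEquivProdPi, add_assoc]

/-- The convolution kernel `d(η)^{-(Q+θ)} |z|^{-α}`; the kernel of the operator is the case
`θ = sp`, evaluated at `ξ⁻¹ ∘ ξ'`. -/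
def kern {n : ℕ} (θ α : ℝ) (η : Heis n) : ℝ := 1 / (hd η ^ (hQ n + θ) * znorm η ^ α)

lemma zsq_nonneg {n : ℕ} (η : Heis n) : 0 ≤ zsq η := by unfold zsq; positivity

lemma kern_nonneg {n : ℕ} (θ α : ℝ) (η : Heis n) : 0 ≤ kern θ α η := by
  have := zsq_nonneg η
  unfold kern hd znorm; positivity

@[fun_prop] lemma measurable_zsq {n : ℕ} : Measurable (zsq : Heis n → ℝ) := by
  unfold zsq; fun_prop
@[fun_prop] lemma measurable_x1 {n : ℕ} : Measurable (x1 : Heis n → ℝ) := by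
  unfold x1; split_ifs <;> fun_prop
@[fun_prop] lemma measurable_kern {n : ℕ} (θ α : ℝ) : Measurable (kern θ α : Heis n → ℝ) := by
  unfold kern hd znorm; fun_prop

lemma kern_eq {n : ℕ} (θ α : ℝ) (η : Heis n) :
    kern θ α η = zsq η ^ (-(α / 2)) * (zsq η ^ 2 + η.2.2 ^ 2) ^ (-((hQ n + θ) / 4)) := by
  have h := zsq_nonneg η
  unfold kern hd znorm
  rw [← Real.rpow_mul (by positivity), Real.sqrt_eq_rpow, ← Real.rpow_mul h, Real.rpow_neg h,
    Real.rpow_neg (by positivity), one_div, mul_inv, mul_comm]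
  rw [show (1 : ℝ) / 2 * α = α / 2 by ring,
    show (1 : ℝ) / 4 * (hQ n + θ) = (hQ n + θ) / 4 by ring]

/-- Integrating out every variable but `x₁` turns the kernel into a multiple of
`|x₁|^{-(1+θ+α)}`. -/
lemma kern_marginal {n : ℕ} (hn : 1 ≤ n) {θ α : ℝ} (h1 : 0 < 2 * n + θ) (h2 : -1 < θ + α)
    (f : ℝ → ℝ≥0∞) (hf : Measurable f) :
    ∫⁻ η : Heis n, f (x1 η) * ENNReal.ofReal (kern θ α η) =
      ENNReal.ofReal (2 * sphereArea (2 * n - 1) * calI (2 * n) θ α) *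
        ∫⁻ a, f a * ENNReal.ofReal (|a| ^ (-(1 + θ + α))) := by
  obtain ⟨m, rfl⟩ : ∃ m, n = m + 1 := ⟨n - 1, by omega⟩
  set b : ℝ := (hQ (m + 1) + θ) / 4 with hb
  have hb1 : 1 < 2 * b := by rw [hb, hQ]; push_cast at *; linarith
  set Φ : ℝ → ℝ≥0∞ := fun Z => ∫⁻ t : ℝ, ENNReal.ofReal (Z ^ (-(α / 2)) * (Z ^ 2 + t ^ 2) ^ (-b))
    with hΦ
  have hΦm : Measurable Φ := Measurable.lintegral_prod_right' (f := fun q : ℝ × ℝ =>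
    ENNReal.ofReal (q.1 ^ (-(α / 2)) * (q.1 ^ 2 + q.2 ^ 2) ^ (-b))) (by fun_prop)
  -- The inner integral over `t` only depends on `|z|²`, through `Φ`.
  have e1 : ∫⁻ η : Heis (m + 1), f (x1 η) * ENNReal.ofReal (kern θ α η) =
      ∫⁻ x : Fin (m + 1) → ℝ, ∫⁻ y : Fin (m + 1) → ℝ,
        f (x 0) * Φ ((∑ i, x i ^ 2) + ∑ i, y i ^ 2) := by
    rw [Measure.volume_eq_prod, lintegral_prod _ (by fun_prop)]
    congr 1; ext x
    rw [Measure.volume_eq_prod, lintegral_prod _ (by fun_prop)]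
    congr 1; ext y
    rw [hΦ, ← lintegral_const_mul _ (by fun_prop)]
    congr 1; ext t
    rw [kern_eq]
    simp [x1, zsq, hb]
  rw [e1, split_lintegral m f hf Φ hΦm, ← lintegral_const_mul _ (by fun_prop)]
  apply lintegral_congr_ae
  filter_upwards [compl_mem_ae_iff.mpr (measure_singleton (0 : ℝ))] with a ha
  have ha : 0 < |a| := abs_pos.mpr ha
  set I1 : ℝ := ∫ t in Set.Ioi (0 : ℝ), (1 + t ^ 2) ^ (-b) with hI1
  have hI1n : 0 ≤ I1 := setIntegral_nonneg measurableSet_Ioi fun t _ => by positivity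
  set γ : ℝ := (2 * (m + 1 : ℝ) + θ + α) / 2 with hγ
  -- After the `t`-integration the homogeneity left for the horizontal variables is `2γ = 2n+θ+α`.
  have hΦw : ∀ w : EuclideanSpace ℝ (Fin m ⊕ Fin (m + 1)), Φ (a ^ 2 + ‖w‖ ^ 2) =
      ENNReal.ofReal (2 * I1) * ENNReal.ofReal ((|a| ^ 2 + ‖w‖ ^ 2) ^ (-γ)) := by
    intro w
    have hZ : 0 < |a| ^ 2 + ‖w‖ ^ 2 := by positivity
    rw [← sq_abs a, hΦ]
    simp only
    simp_rw [ENNReal.ofReal_mul (Real.rpow_nonneg hZ.le _)]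
    rw [lintegral_const_mul _ (by fun_prop), t_lintegral hb1 hZ,
      ← ENNReal.ofReal_mul (by positivity), ← ENNReal.ofReal_mul (by positivity), ← mul_assoc,
      ← Real.rpow_add hZ, mul_comm]
    congr 3
    rw [hb, hγ, hQ]; push_cast; ring
  simp_rw [hΦw]
  have hcard : Fintype.card (Fin m ⊕ Fin (m + 1)) = 2 * (m + 1) - 1 := by simp; omega
  have hcard' : (Fintype.card (Fin m ⊕ Fin (m + 1)) : ℝ) = 2 * (m + 1) - 1 := by
    simp; ring
  rw [lintegral_const_mul _ (by fun_prop), w_lintegral (by rw [hcard']; push_cast at *; linarith) ha,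
    mul_left_comm _ (f a), ← ENNReal.ofReal_mul (by positivity), mul_left_comm,
    mul_comm (ENNReal.ofReal _) (ENNReal.ofReal (|a| ^ _)), ← ENNReal.ofReal_mul (by positivity)]
  congr 2
  rw [hcard', hcard, calI]
  have e2 : (2 * (m + 1 : ℝ) - 1 - 2 * γ) = -(1 + θ + α) := by rw [hγ]; ring
  have e3 : ∫ t in Set.Ioi (0 : ℝ), (1 + t ^ 2) ^ (-((((2 * (m + 1) : ℕ) : ℝ) + 2 + θ) / 4)) = I1 := by
    rw [hI1, hb, hQ]; push_cast; rfl
  have e4 : ∫ r in Set.Ioi (0 : ℝ), r ^ ((((2 * (m + 1) : ℕ) : ℝ)) - 2) *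
        (1 + r ^ 2) ^ (-((((2 * (m + 1) : ℕ) : ℝ) + θ + α) / 2)) =
      ∫ r in Set.Ioi (0 : ℝ), r ^ (2 * (m + 1 : ℝ) - 1 - 1) * (1 + r ^ 2) ^ (-γ) := by
    rw [hγ]; push_cast
    congr! 4
    ring
  rw [e2, e3, e4]
  ring

lemma const_nonneg {n : ℕ} (θ α : ℝ) :
    0 ≤ 2 * sphereArea (2 * n - 1) * calI (2 * n) θ α := by
  have h1 : 0 ≤ sphereArea (2 * n - 1) := by
    unfold sphereArea
    have : 0 ≤ Real.Gamma (((2 * n - 1 : ℕ) : ℝ) / 2) := Real.Gamma_nonneg_of_nonneg (by positivity)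
    positivity
  have h2 : 0 ≤ calI (2 * n) θ α := by
    unfold calI
    apply mul_nonneg
    · exact setIntegral_nonneg measurableSet_Ioi fun t _ => by positivity
    · exact setIntegral_nonneg measurableSet_Ioi fun t ht => by
        have : (0 : ℝ) < t := ht
        positivity
  positivity

/-- Left translations preserve Lebesgue measure. -/
lemma measurePreserving_Hmul {n : ℕ} (ξ : Heis n) :
    MeasurePreserving (fun η : Heis n => Hmul ξ η) := by
  have inner : ∀ x : Fin n → ℝ, MeasurePreserving (fun p : (Fin n → ℝ) × ℝ =>
      (ξ.2.1 + p.1, ξ.2.2 + p.2 + 2 * (∑ i, ξ.2.1 i * x i) - 2 * (∑ i, ξ.1 i * p.1 i))) := by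
    intro x
    refine (measurePreserving_add_left volume ξ.2.1).skew_product (μc := volume) (μd := volume)
      (g := fun y t => ξ.2.2 + t + 2 * (∑ i, ξ.2.1 i * x i) - 2 * (∑ i, ξ.1 i * y i))
      (by fun_prop) (ae_of_all _ fun y => ?_)
    have := (measurePreserving_add_left (volume : Measure ℝ)
      (ξ.2.2 + 2 * (∑ i, ξ.2.1 i * x i) - 2 * (∑ i, ξ.1 i * y i))).map_eq
    convert this using 2
    ext t; ring
  exact (measurePreserving_add_left volume ξ.1).skew_product (μc := volume) (μd := volume)
      (g := fun x (p : (Fin n → ℝ) × ℝ) =>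
        (ξ.2.1 + p.1, ξ.2.2 + p.2 + 2 * (∑ i, ξ.2.1 i * x i) - 2 * (∑ i, ξ.1 i * p.1 i)))
      (by fun_prop) (ae_of_all _ fun x => (inner x).map_eq)

@[fun_prop] lemma measurable_Hmul_right {n : ℕ} (ξ : Heis n) : Measurable (Hmul ξ) := by
  unfold Hmul; fun_prop

@[fun_prop] lemma measurable_Hmul_Hinv {n : ℕ} :
    Measurable (fun q : Heis n × Heis n => Hmul (Hinv q.1) q.2) := by
  unfold Hmul Hinv; fun_prop

lemma Hinv_Hmul_Hmul {n : ℕ} (ξ η : Heis n) : Hmul (Hinv ξ) (Hmul ξ η) = η := by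
  unfold Hmul Hinv
  refine Prod.ext (by simp) (Prod.ext (by simp) ?_)
  simp only [Pi.neg_apply, Pi.add_apply, neg_mul, Finset.sum_neg_distrib, mul_add,
    Finset.sum_add_distrib]
  have : ∑ i, ξ.2.1 i * ξ.1 i = ∑ i, ξ.1 i * ξ.2.1 i := by simp_rw [mul_comm]
  rw [this]; ring

lemma x1_Hmul {n : ℕ} (ξ η : Heis n) : x1 (Hmul ξ η) = x1 ξ + x1 η := by
  unfold x1 Hmul; split_ifs <;> simp

lemma kern_symm {n : ℕ} (θ α : ℝ) (ξ η : Heis n) :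
    kern θ α (Hmul (Hinv ξ) η) = kern θ α (Hmul (Hinv η) ξ) := by
  have hz : zsq (Hmul (Hinv ξ) η) = zsq (Hmul (Hinv η) ξ) := by
    unfold zsq Hmul Hinv
    congr 1 <;> (apply Finset.sum_congr rfl; intro i _; simp; ring)
  have ht : (Hmul (Hinv ξ) η).2.2 = -(Hmul (Hinv η) ξ).2.2 := by
    unfold Hmul Hinv
    simp only [Pi.neg_apply, neg_mul, Finset.sum_neg_distrib]
    have e1 : ∑ i, ξ.2.1 i * η.1 i = ∑ i, η.1 i * ξ.2.1 i := by simp_rw [mul_comm]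
    have e2 : ∑ i, ξ.1 i * η.2.1 i = ∑ i, η.2.1 i * ξ.1 i := by simp_rw [mul_comm]
    rw [e1, e2]; ring
  rw [kern_eq, kern_eq, hz, ht, neg_sq]

/-- `kern_marginal` translated to the base point `ξ`. -/
lemma kern_marginal_at {n : ℕ} (hn : 1 ≤ n) {θ α : ℝ} (h1 : 0 < 2 * n + θ) (h2 : -1 < θ + α)
    (f : ℝ → ℝ≥0∞) (hf : Measurable f) (ξ : Heis n) :
    ∫⁻ ξ' : Heis n, f (x1 ξ') * ENNReal.ofReal (kern θ α (Hmul (Hinv ξ) ξ')) =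
      ENNReal.ofReal (2 * sphereArea (2 * n - 1) * calI (2 * n) θ α) *
        ∫⁻ b, f b * ENNReal.ofReal (|b - x1 ξ| ^ (-(1 + θ + α))) := by
  rw [← (measurePreserving_Hmul ξ).lintegral_comp
    (f := fun ξ' => f (x1 ξ') * ENNReal.ofReal (kern θ α (Hmul (Hinv ξ) ξ'))) (by fun_prop)]
  simp_rw [Hinv_Hmul_Hmul, x1_Hmul]
  rw [kern_marginal hn h1 h2 (fun a => f (x1 ξ + a)) (by fun_prop)]
  congr 1
  rw [← (measurePreserving_add_left (volume : Measure ℝ) (x1 ξ)).lintegral_comp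
    (f := fun b => f b * ENNReal.ofReal (|b - x1 ξ| ^ (-(1 + θ + α)))) (by fun_prop)]
  simp

/-! ### One-dimensional profile and truncation -/

/-- The one-dimensional profile `(b₊)^β`. -/
def prof (β b : ℝ) : ℝ := if 0 < b then b ^ β else 0

@[fun_prop] lemma measurable_prof (β : ℝ) : Measurable (prof β) := by
  unfold prof
  exact Measurable.ite measurableSet_Ioi (by fun_prop) (by fun_prop)

@[fun_prop] lemma measurable_Jp (p : ℝ) : Measurable (Jp p) := by unfold Jp; fun_prop

lemma prof_nonneg (β b : ℝ) : 0 ≤ prof β b := by unfold prof; split_ifs <;> positivity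

lemma prof_rpow (β p b : ℝ) (hp : 1 < p) : prof β b ^ (p - 1) = prof (β * (p - 1)) b := by
  unfold prof
  split_ifs with h
  · rw [← Real.rpow_mul h.le]
  · exact Real.zero_rpow (by linarith)

lemma prof_mul (β : ℝ) {x : ℝ} (hx : 0 < x) (τ : ℝ) : prof β (x * τ) = x ^ β * prof β τ := by
  unfold prof
  by_cases h : 0 < τ
  · simp [h, hx, Real.mul_rpow hx.le h.le]
  · simp [h, hx]

lemma Jp_neg (p t : ℝ) : Jp p (-t) = -Jp p t := by unfold Jp; simp

lemma Jp_of_nonneg {p t : ℝ} (hp : 1 < p) (ht : 0 ≤ t) : Jp p t = t ^ (p - 1) := by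
  unfold Jp
  rcases ht.eq_or_lt with rfl | h
  · simp [Real.zero_rpow (show p - 1 ≠ 0 by linarith)]
  · rw [abs_of_pos h, ← Real.rpow_add_one h.ne']; congr 1; ring

lemma Jp_nonneg {p t : ℝ} (ht : 0 ≤ t) : 0 ≤ Jp p t := by unfold Jp; positivity

lemma abs_Jp {p : ℝ} (hp : 1 < p) (t : ℝ) : |Jp p t| = |t| ^ (p - 1) := by
  rcases le_total 0 t with h | h
  · rw [abs_of_nonneg (Jp_nonneg h), Jp_of_nonneg hp h, abs_of_nonneg h]
  · have : Jp p t = -Jp p (-t) := by rw [Jp_neg, neg_neg]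
    rw [this, abs_neg, abs_of_nonneg (Jp_nonneg (by linarith)), Jp_of_nonneg hp (by linarith),
      abs_of_nonpos h]

lemma Jp_mono {p : ℝ} (hp : 1 < p) {a b : ℝ} (hab : a ≤ b) : Jp p a ≤ Jp p b := by
  rcases le_total 0 a with h | h
  · rw [Jp_of_nonneg hp h, Jp_of_nonneg hp (h.trans hab)]
    exact Real.rpow_le_rpow h hab (by linarith)
  · rcases le_total 0 b with h' | h'
    · have := Jp_nonneg (p := p) (t := -a) (by linarith)
      rw [Jp_neg] at this
      linarith [Jp_nonneg (p := p) h']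
    · have e : Jp p (-b) ≤ Jp p (-a) := by
        rw [Jp_of_nonneg hp (by linarith), Jp_of_nonneg hp (by linarith)]
        exact Real.rpow_le_rpow (by linarith) (by linarith) (by linarith)
      rw [Jp_neg, Jp_neg] at e; linarith

lemma Jp_mul {p c : ℝ} (hp : 1 < p) (hc : 0 ≤ c) (t : ℝ) : Jp p (c * t) = c ^ (p - 1) * Jp p t := by
  rw [← Jp_of_nonneg hp hc]
  unfold Jp
  rw [abs_mul, Real.mul_rpow (abs_nonneg _) (abs_nonneg _)]; ring

lemma abs_Jp_sub_le {p : ℝ} (hp : 1 < p) {a b : ℝ} (ha : 0 ≤ a) (hb : 0 ≤ b) :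
    |Jp p (a - b)| ≤ a ^ (p - 1) + b ^ (p - 1) := by
  rw [abs_Jp hp]
  have h1 : 0 ≤ a ^ (p - 1) := by positivity
  have h2 : 0 ≤ b ^ (p - 1) := by positivity
  rcases le_total a b with h | h
  · have : |a - b| ^ (p - 1) ≤ b ^ (p - 1) :=
      Real.rpow_le_rpow (abs_nonneg _) (by rw [abs_of_nonpos (by linarith)]; linarith) (by linarith)
    linarith
  · have : |a - b| ^ (p - 1) ≤ a ^ (p - 1) :=
      Real.rpow_le_rpow (abs_nonneg _) (by rw [abs_of_nonneg (by linarith)]; linarith) (by linarith)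
    linarith

/-- Real powers are Lipschitz on compact subintervals of `(0,∞)`. -/
lemma lip_rpow (a : ℝ) {l u : ℝ} (hl : 0 < l) : ∃ C : ℝ, 0 ≤ C ∧ ∀ x ∈ Set.Icc l u,
    ∀ y ∈ Set.Icc l u, |x ^ a - y ^ a| ≤ C * |x - y| := by
  have hc : ContinuousOn (fun x : ℝ => a * x ^ (a - 1)) (Set.Icc l u) := by
    apply ContinuousOn.mul continuousOn_const
    apply ContinuousOn.rpow_const continuousOn_id
    intro x hx; left; exact (hl.trans_le hx.1).ne'
  obtain ⟨C, hC⟩ := isCompact_Icc.exists_bound_of_continuousOn hc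
  refine ⟨max C 0, le_max_right _ _, fun x hx y hy => ?_⟩
  exact (convex_Icc l u).norm_image_sub_le_of_norm_hasDerivWithin_le
    (fun z hz => (Real.hasDerivAt_rpow_const (Or.inl (hl.trans_le hz.1).ne')).hasDerivWithinAt)
    (fun z hz => (hC z hz).trans (le_max_left _ _)) hy hx

/-- The pairs `(x,b)` of heights kept by the truncation of ratio `ρ < 1`. It is symmetric and
invariant under dilations, and for `x > 0` its complement is `ρ x < b < x/ρ`. -/
def trunc (ρ : ℝ) : Set (ℝ × ℝ) := {q | q.2 ≤ ρ * q.1 ∨ q.1 ≤ ρ * q.2}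

lemma measurableSet_trunc (ρ : ℝ) : MeasurableSet (trunc ρ) :=
  MeasurableSet.union (s₁ := {q : ℝ × ℝ | q.2 ≤ ρ * q.1}) (s₂ := {q : ℝ × ℝ | q.1 ≤ ρ * q.2})
    (measurableSet_le (by fun_prop) (by fun_prop)) (measurableSet_le (by fun_prop) (by fun_prop))

lemma trunc_symm (ρ x b : ℝ) : (x, b) ∈ trunc ρ ↔ (b, x) ∈ trunc ρ := or_comm

lemma trunc_mul (ρ : ℝ) {x : ℝ} (hx : 0 < x) (τ : ℝ) : (x, x * τ) ∈ trunc ρ ↔ (1, τ) ∈ trunc ρ := by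
  unfold trunc
  simp only [Set.mem_ofPred_eq, mul_one]
  rw [mul_comm ρ x, mul_le_mul_iff_right₀ hx, mul_left_comm, le_mul_iff_one_le_right hx]

/-- Every off-diagonal pair is eventually kept. -/
lemma trunc_eventually {x b : ℝ} (h : x ≠ b) : ∀ᶠ ρ in 𝓝[<] (1 : ℝ), (x, b) ∈ trunc ρ := by
  have key : ∀ x b : ℝ, b < x → ∀ᶠ ρ in 𝓝[<] (1 : ℝ), b ≤ ρ * x := by
    intro x b h
    have : Tendsto (fun ρ : ℝ => ρ * x) (𝓝[<] 1) (𝓝 (1 * x)) :=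
      ((continuous_id.mul continuous_const).tendsto 1).mono_left nhdsWithin_le_nhds
    rw [one_mul] at this
    filter_upwards [this.eventually (lt_mem_nhds h)] with ρ hρ using hρ.le
  rcases lt_or_gt_of_ne h with h | h
  · filter_upwards [key b x h] with ρ hρ using Or.inr hρ
  · filter_upwards [key x b h] with ρ hρ using Or.inl hρ

/-- Away from the truncated diagonal, `|b - 1|` is comparable to `1 + |b|`, so that the kernel is not
singular there. -/
lemma trunc_lower {ρ b : ℝ} (hρ0 : 0 < ρ) (hρ1 : ρ < 1) (h : (1, b) ∈ trunc ρ) :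
    (1 - ρ) / 2 * (1 + |b|) ≤ |b - 1| := by
  rcases h with h | h
  · simp only [mul_one] at h
    rw [abs_of_nonpos (show b - 1 ≤ 0 by linarith)]
    rcases abs_cases b with ⟨e, _⟩ | ⟨e, _⟩ <;> rw [e] <;> nlinarith
  · simp only at h
    have hb : 0 < b := by by_contra hb; nlinarith
    have : 1 ≤ b := by nlinarith
    rw [abs_of_nonneg (show 0 ≤ b - 1 by linarith), abs_of_pos hb]
    nlinarith

/-- The majorant of the truncated one-dimensional integrand. -/
def maj (p S β ρ x b : ℝ) : ℝ :=
  (trunc ρ).indicator (fun q => (q.1 ^ (β * (p - 1)) + prof β q.2 ^ (p - 1)) *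
    |q.2 - q.1| ^ (-(1 + S))) (x, b)

/-- The truncated one-dimensional integrand. -/
def ker1 (p S β ρ x b : ℝ) : ℝ :=
  (trunc ρ).indicator (fun q => Jp p (q.1 ^ β - prof β q.2) * |q.2 - q.1| ^ (-(1 + S))) (x, b)

lemma measurable_maj (p S β ρ : ℝ) :
    Measurable (fun q : ℝ × ℝ => maj p S β ρ q.1 q.2) := by
  unfold maj
  exact Measurable.indicator (by fun_prop) (measurableSet_trunc ρ)

lemma measurable_ker1 (p S β ρ : ℝ) :
    Measurable (fun q : ℝ × ℝ => ker1 p S β ρ q.1 q.2) := by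
  unfold ker1
  exact Measurable.indicator (by fun_prop) (measurableSet_trunc ρ)

lemma abs_ker1_le {p S β ρ x b : ℝ} (hp : 1 < p) (hx : 0 < x) :
    |ker1 p S β ρ x b| ≤ maj p S β ρ x b := by
  unfold ker1 maj
  by_cases h : (x, b) ∈ trunc ρ
  · rw [Set.indicator_of_mem h, Set.indicator_of_mem h, abs_mul, abs_of_nonneg (a := |_| ^ _) (by positivity)]
    gcongr
    simp only
    rw [Real.rpow_mul hx.le]
    exact abs_Jp_sub_le hp (by positivity) (prof_nonneg _ _)
  · simp [h]

lemma maj_mul {p S β ρ x : ℝ} (hp : 1 < p) (hx : 0 < x) (τ : ℝ) :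
    maj p S β ρ x (x * τ) = x ^ (β * (p - 1) - (1 + S)) * maj p S β ρ 1 τ := by
  unfold maj
  by_cases h : (1, τ) ∈ trunc ρ
  · rw [Set.indicator_of_mem h, Set.indicator_of_mem ((trunc_mul ρ hx τ).2 h)]
    simp only
    rw [show x * τ - x = x * (τ - 1) by ring, abs_mul, abs_of_pos hx,
      Real.mul_rpow hx.le (abs_nonneg _), prof_rpow _ _ _ hp, prof_rpow _ _ _ hp, prof_mul _ hx,
      sub_eq_add_neg (β * (p - 1)), Real.rpow_add hx, Real.one_rpow]
    ring
  · rw [Set.indicator_of_notMem h, Set.indicator_of_notMem (by rwa [trunc_mul ρ hx τ]), mul_zero]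

lemma ker1_mul {p S β ρ x : ℝ} (hp : 1 < p) (hx : 0 < x) (τ : ℝ) :
    ker1 p S β ρ x (x * τ) = x ^ (β * (p - 1) - (1 + S)) * ker1 p S β ρ 1 τ := by
  unfold ker1
  by_cases h : (1, τ) ∈ trunc ρ
  · rw [Set.indicator_of_mem h, Set.indicator_of_mem ((trunc_mul ρ hx τ).2 h)]
    simp only
    rw [show x * τ - x = x * (τ - 1) by ring, abs_mul, abs_of_pos hx,
      Real.mul_rpow hx.le (abs_nonneg _), prof_mul _ hx,
      show x ^ β - x ^ β * prof β τ = x ^ β * (1 - prof β τ) by ring,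
      Jp_mul hp (by positivity), ← Real.rpow_mul hx.le,
      sub_eq_add_neg (β * (p - 1)), Real.rpow_add hx, Real.one_rpow]
    ring
  · rw [Set.indicator_of_notMem h, Set.indicator_of_notMem (by rwa [trunc_mul ρ hx τ]), mul_zero]

/-- If `g` is `g1` rescaled by `x` with homogeneity `κ - 1`, the change of variables `b = xτ` adds one
to the exponent. -/
lemma integral_of_scaling {g g1 : ℝ → ℝ} {x κ : ℝ} (hx : 0 < x)
    (h : ∀ τ, g (x * τ) = x ^ (κ - 1) * g1 τ) : ∫ b, g b = x ^ κ * ∫ τ, g1 τ := by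
  have e := Measure.integral_comp_mul_left g x
  simp_rw [h] at e
  rw [integral_const_mul, abs_of_pos (by positivity), smul_eq_mul, Real.rpow_sub_one hx.ne'] at e
  field_simp at e
  linarith

lemma integrable_of_scaling {g g1 : ℝ → ℝ} {x c : ℝ} (hx : 0 < x)
    (h : ∀ τ, g (x * τ) = c * g1 τ) (hg : Integrable g1) : Integrable g := by
  rw [← integrable_comp_mul_left_iff g hx.ne']
  simp_rw [h]
  exact hg.const_mul _

/-- The two bounds on `κ` are integrability at `0` and at `∞`; with `κ = β(p-1)` they are the bounds
on `β` in the theorem. -/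
lemma integrable_prof_decay {κ S : ℝ} (h1 : -1 < κ) (h2 : κ < S) :
    Integrable (fun b => prof κ b * (1 + |b|) ^ (-(1 + S))) := by
  have e : (fun b => prof κ b * (1 + |b|) ^ (-(1 + S))) =
      (Set.Ioi 0).indicator (fun b => b ^ κ * (1 + |b|) ^ (-(1 + S))) := by
    ext b
    unfold prof Set.indicator
    simp only [Set.mem_Ioi]
    split_ifs <;> simp
  rw [e, integrable_indicator_iff measurableSet_Ioi, ← Set.Ioc_union_Ioi_eq_Ioi zero_le_one]
  apply IntegrableOn.union
  · have : IntegrableOn (fun b : ℝ => b ^ κ) (Set.Ioc 0 1) := by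
      rw [← intervalIntegrable_iff_integrableOn_Ioc_of_le zero_le_one]
      exact intervalIntegral.intervalIntegrable_rpow' h1
    refine Integrable.mono' this (by fun_prop) ?_
    filter_upwards [ae_restrict_mem measurableSet_Ioc] with b hb
    have hb0 : 0 < b := hb.1
    rw [Real.norm_eq_abs, abs_of_nonneg (by positivity)]
    apply mul_le_of_le_one_right (by positivity)
    exact Real.rpow_le_one_of_one_le_of_nonpos (by linarith [abs_nonneg b]) (by linarith)
  · have : IntegrableOn (fun b : ℝ => b ^ (κ - (1 + S))) (Set.Ioi 1) :=
      integrableOn_Ioi_rpow_of_lt (by linarith) one_pos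
    refine Integrable.mono' this (by fun_prop) ?_
    filter_upwards [ae_restrict_mem measurableSet_Ioi] with b hb
    have hb0 : 0 < b := one_pos.trans hb
    rw [Real.norm_eq_abs, abs_of_nonneg (by positivity), sub_eq_add_neg, Real.rpow_add hb0]
    exact mul_le_mul_of_nonneg_left
      (Real.rpow_le_rpow_of_nonpos hb0 (by rw [abs_of_pos hb0]; linarith) (by linarith))
      (by positivity)

lemma integrable_maj_one {p S β ρ : ℝ} (hp : 1 < p) (hS : 0 < S) (h1 : -1 < β * (p - 1))
    (h2 : β * (p - 1) < S) (hρ0 : 0 < ρ) (hρ1 : ρ < 1) : Integrable (maj p S β ρ 1) := by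
  have i1 : Integrable (fun b : ℝ => (1 + |b|) ^ (-(1 + S))) :=
    integrable_one_add_norm (E := ℝ) (by simpa using hS)
  have i2 := (i1.add (integrable_prof_decay h1 h2)).const_mul (((1 - ρ) / 2) ^ (-(1 + S)))
  refine i2.mono' ((measurable_maj p S β ρ).comp measurable_prodMk_left).aestronglyMeasurable
    (ae_of_all _ fun b => ?_)
  have hc : 0 < (1 - ρ) / 2 := by linarith
  have hpn := prof_nonneg (β * (p - 1)) b
  unfold maj
  by_cases h : (1, b) ∈ trunc ρ
  · rw [Set.indicator_of_mem h]
    simp only [Real.one_rpow, Pi.add_apply]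
    rw [prof_rpow _ _ _ hp, Real.norm_eq_abs, abs_of_nonneg (by positivity)]
    have : |b - 1| ^ (-(1 + S)) ≤ ((1 - ρ) / 2) ^ (-(1 + S)) * (1 + |b|) ^ (-(1 + S)) := by
      rw [← Real.mul_rpow hc.le (by positivity)]
      exact Real.rpow_le_rpow_of_nonpos (by positivity) (trunc_lower hρ0 hρ1 h) (by linarith)
    calc _ ≤ (1 + prof (β * (p - 1)) b) * (((1 - ρ) / 2) ^ (-(1 + S)) * (1 + |b|) ^ (-(1 + S))) := by
          gcongr
      _ = _ := by ring
  · rw [Set.indicator_of_notMem h, norm_zero]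
    simp only [Pi.add_apply]
    positivity

/-! ### The one-dimensional constant -/

/-- The integrand of the one-dimensional constant. -/
def lamInt (p S β τ : ℝ) : ℝ :=
  Jp p (1 - τ ^ β) * (1 - τ ^ (S - 1 - β * (p - 1))) / (1 - τ) ^ (1 + S)

lemma integrable_ker1_one {p S β ρ : ℝ} (hp : 1 < p) (hS : 0 < S) (h1 : -1 < β * (p - 1))
    (h2 : β * (p - 1) < S) (hρ0 : 0 < ρ) (hρ1 : ρ < 1) : Integrable (ker1 p S β ρ 1) :=
  (integrable_maj_one hp hS h1 h2 hρ0 hρ1).mono'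
    ((measurable_ker1 p S β ρ).comp measurable_prodMk_left).aestronglyMeasurable
    (ae_of_all _ fun _ => abs_ker1_le hp one_pos)

lemma ker1_one {p S β ρ : ℝ} (hρ0 : 0 < ρ) : ker1 p S β ρ 1 =
    (Set.Iic ρ ∪ Set.Ici ρ⁻¹).indicator
      (fun b => Jp p (1 - prof β b) * |b - 1| ^ (-(1 + S))) := by
  ext b
  have : (1, b) ∈ trunc ρ ↔ b ∈ Set.Iic ρ ∪ Set.Ici ρ⁻¹ := by
    unfold trunc
    simp only [Set.mem_ofPred_eq, mul_one, Set.mem_union, Set.mem_Iic, Set.mem_Ici]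
    rw [inv_le_iff_one_le_mul₀ hρ0, mul_comm]
  unfold ker1 Set.indicator
  simp only [this, Real.one_rpow]

/-- The reflection `b ↦ 1/b` folds the part of the integrand above `1` onto `(0,1)`. -/
lemma fold_eq {p S β τ : ℝ} (hp : 1 < p) (h0 : 0 < τ) (h1 : τ < 1) :
    lamInt p S β τ = Jp p (1 - prof β τ) * |τ - 1| ^ (-(1 + S)) +
      |-(τ ^ 2)⁻¹| • (Jp p (1 - prof β τ⁻¹) * |τ⁻¹ - 1| ^ (-(1 + S))) := by
  have h2 : 0 < 1 - τ := by linarith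
  have e1 : 1 - τ⁻¹ ^ β = -(τ ^ (-β) * (1 - τ ^ β)) := by
    rw [Real.inv_rpow h0.le, ← Real.rpow_neg h0.le, mul_sub, ← Real.rpow_add h0]; simp
  have e2 : |τ⁻¹ - 1| = τ⁻¹ * (1 - τ) := by
    rw [abs_of_pos (by rw [sub_pos]; exact (one_lt_inv₀ h0).2 h1)]; field_simp
  have e3 : |-(τ ^ 2)⁻¹| = τ ^ (-2 : ℝ) := by
    rw [abs_neg, abs_of_pos (by positivity), Real.rpow_neg h0.le]; norm_cast
  have e4 : |τ - 1| = 1 - τ := by rw [abs_sub_comm, abs_of_pos h2]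
  unfold lamInt prof
  rw [if_pos h0, if_pos (inv_pos.2 h0), e1, Jp_neg, Jp_mul hp (by positivity), e2, e3, e4,
    ← Real.rpow_mul h0.le, Real.mul_rpow (by positivity) h2.le, Real.inv_rpow h0.le,
    ← Real.rpow_neg h0.le, Real.rpow_neg h2.le, smul_eq_mul]
  have e5 : τ ^ (S - 1 - β * (p - 1)) = τ ^ (-2 : ℝ) * τ ^ (-β * (p - 1)) * τ ^ (- -(1 + S)) := by
    rw [← Real.rpow_add h0, ← Real.rpow_add h0]; congr 1; ring
  rw [e5]
  field_simp
  ring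

lemma inv_image {ρ : ℝ} (hρ0 : 0 < ρ) : (fun τ : ℝ => τ⁻¹) '' Set.Ioc 0 ρ = Set.Ici ρ⁻¹ := by
  ext b
  constructor
  · rintro ⟨τ, ⟨h0, h1⟩, rfl⟩
    exact inv_anti₀ h0 h1
  · intro hb
    have hb0 : 0 < b := (inv_pos.2 hρ0).trans_le hb
    exact ⟨b⁻¹, ⟨inv_pos.2 hb0, inv_le_of_inv_le₀ hρ0 hb⟩, inv_inv b⟩

/-- The half-line `b ≤ 0`, where the profile vanishes, contributes `∫₁^∞ c^{-(1+S)} dc = 1/S`; the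
rest is folded onto `(0,ρ)` by `fold_eq`. -/
lemma ker1_integral {p S β ρ : ℝ} (hp : 1 < p) (hS : 0 < S) (h1 : -1 < β * (p - 1))
    (h2 : β * (p - 1) < S) (hρ0 : 0 < ρ) (hρ1 : ρ < 1) :
    IntegrableOn (lamInt p S β) (Set.Ioc 0 ρ) ∧
    ∫ b, ker1 p S β ρ 1 b = 1 / S + ∫ τ in Set.Ioc 0 ρ, lamInt p S β τ := by
  have hi := integrable_ker1_one hp hS h1 h2 hρ0 hρ1
  have hlt : ρ < ρ⁻¹ := hρ1.trans ((one_lt_inv₀ hρ0).2 hρ1)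
  rw [ker1_one hρ0] at hi ⊢
  rw [integrable_indicator_iff (measurableSet_Iic.union measurableSet_Ici)] at hi
  rw [integral_indicator (measurableSet_Iic.union measurableSet_Ici)]
  set k : ℝ → ℝ := fun b => Jp p (1 - prof β b) * |b - 1| ^ (-(1 + S)) with hk
  have i1 : IntegrableOn k (Set.Iic ρ) := hi.mono_set Set.subset_union_left
  have i2 : IntegrableOn k (Set.Ici ρ⁻¹) := hi.mono_set Set.subset_union_right
  have i3 : IntegrableOn k (Set.Iic 0) := i1.mono_set (Set.Iic_subset_Iic.2 hρ0.le)
  have i4 : IntegrableOn k (Set.Ioc 0 ρ) := i1.mono_set fun x hx => hx.2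
  have hder : ∀ x ∈ Set.Ioc 0 ρ,
      HasDerivWithinAt (fun τ : ℝ => τ⁻¹) (-(x ^ 2)⁻¹) (Set.Ioc 0 ρ) x :=
    fun x hx => (hasDerivAt_inv hx.1.ne').hasDerivWithinAt
  have i5 : IntegrableOn (fun τ => |-(τ ^ 2)⁻¹| • k τ⁻¹) (Set.Ioc 0 ρ) := by
    rw [← integrableOn_image_iff_integrableOn_abs_deriv_smul measurableSet_Ioc hder
      inv_injective.injOn, inv_image hρ0]
    exact i2
  have hfold : Set.EqOn (lamInt p S β) (fun τ => k τ + |-(τ ^ 2)⁻¹| • k τ⁻¹) (Set.Ioc 0 ρ) :=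
    fun τ hτ => fold_eq hp hτ.1 (hτ.2.trans_lt hρ1)
  refine ⟨(i4.add i5).congr_fun hfold.symm measurableSet_Ioc, ?_⟩
  have hneg : ∫ b in Set.Iic 0, k b = 1 / S := by
    have : ∫ b in Set.Iic 0, k b = ∫ b in Set.Iic (0 : ℝ), (fun c => c ^ (-(1 + S))) (1 - b) := by
      apply setIntegral_congr_fun measurableSet_Iic
      intro b (hb : b ≤ 0)
      simp only [hk]
      rw [prof, if_neg hb.not_gt, Jp_of_nonneg hp (by norm_num), abs_sub_comm,
        abs_of_pos (by linarith)]
      simp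
    rw [this]
    have e := (Measure.measurePreserving_sub_left (volume : Measure ℝ) 1).setIntegral_preimage_emb
      (MeasurableEquiv.subLeft (1 : ℝ)).measurableEmbedding (fun c : ℝ => c ^ (-(1 + S))) (Set.Ici 1)
    have hpre : (fun b : ℝ => 1 - b) ⁻¹' Set.Ici 1 = Set.Iic 0 := by
      ext b; simp
    rw [hpre] at e
    rw [e, integral_Ici_eq_integral_Ioi, integral_Ioi_rpow_of_lt (by linarith) one_pos,
      Real.one_rpow]
    rw [show -(1 + S) + 1 = -S by ring, neg_div_neg_eq]
  have d1 : Disjoint (Set.Iic ρ) (Set.Ici ρ⁻¹) :=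
    Set.disjoint_left.2 fun x hx hx' => (hlt.trans_le hx').not_ge hx
  have d2 : Disjoint (Set.Iic 0) (Set.Ioc 0 ρ) :=
    Set.disjoint_left.2 fun x hx hx' => hx'.1.not_ge hx
  rw [setIntegral_union d1 measurableSet_Ici i1 i2, ← Set.Iic_union_Ioc_eq_Iic hρ0.le,
    setIntegral_union d2 measurableSet_Ioc i3 i4, hneg, ← inv_image hρ0,
    integral_image_eq_integral_abs_deriv_smul measurableSet_Ioc hder inv_injective.injOn,
    add_assoc, ← integral_add i4 i5, setIntegral_congr_fun measurableSet_Ioc hfold]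

/-- Near `τ = 1` the numerator is `O((1-τ)^p)`, so that `S < p` gives integrability; near `τ = 0` the
integrability is the one of the truncated integrand. -/
lemma lamInt_integrable {p S β : ℝ} (hp : 1 < p) (hS : 0 < S) (hSp : S < p)
    (h1 : -1 < β * (p - 1)) (h2 : β * (p - 1) < S) :
    IntegrableOn (lamInt p S β) (Set.Icc 0 1) := by
  have hm : Measurable (lamInt p S β) := by unfold lamInt; fun_prop
  rw [integrableOn_Icc_iff_integrableOn_Ioo,
    ← Set.Ioc_union_Ioo_eq_Ioo (show (0 : ℝ) ≤ 1 / 2 by norm_num) (by norm_num : (1 / 2 : ℝ) < 1)]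
  refine (ker1_integral hp hS h1 h2 (by norm_num) (by norm_num)).1.union ?_
  obtain ⟨C, hC0, hC⟩ := lip_rpow β (l := 1 / 2) (u := 1) (by norm_num)
  obtain ⟨D, hD0, hD⟩ := lip_rpow (S - 1 - β * (p - 1)) (l := 1 / 2) (u := 1) (by norm_num)
  have hI : IntegrableOn (fun τ : ℝ => C ^ (p - 1) * D * (1 - τ) ^ (p - 1 - S)) (Set.Ioo (1 / 2) 1) := by
    apply Integrable.const_mul
    have := (intervalIntegral.intervalIntegrable_rpow' (a := 0) (b := 1 / 2)
      (r := p - 1 - S) (by linarith)).comp_sub_left 1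
    have h3 := this.symm
    rw [show (1 : ℝ) - 1 / 2 = 1 / 2 by norm_num, sub_zero,
      intervalIntegrable_iff_integrableOn_Ioo_of_le (by norm_num)] at h3
    exact h3
  refine Integrable.mono' hI hm.aestronglyMeasurable ?_
  filter_upwards [ae_restrict_mem measurableSet_Ioo] with τ hτ
  have hpos : 0 < 1 - τ := by linarith [hτ.2]
  have m1 : (1 : ℝ) ∈ Set.Icc (1 / 2 : ℝ) 1 := by norm_num
  have m2 : τ ∈ Set.Icc (1 / 2 : ℝ) 1 := ⟨hτ.1.le, hτ.2.le⟩
  have a1 := hC 1 m1 τ m2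
  have a2 := hD 1 m1 τ m2
  rw [Real.one_rpow, abs_of_pos hpos] at a1 a2
  rw [Real.norm_eq_abs, lamInt, abs_div, abs_mul, abs_Jp hp, abs_of_pos (a := (1 - τ) ^ _) (by positivity),
    div_le_iff₀ (by positivity)]
  calc _ ≤ (C * (1 - τ)) ^ (p - 1) * (D * (1 - τ)) := by
        gcongr
    _ = _ := by
        rw [mul_assoc, ← Real.rpow_add hpos, Real.mul_rpow hC0 hpos.le,
          show p - 1 - S + (1 + S) = (p - 1) + 1 by ring, Real.rpow_add_one hpos.ne']
        ring

/-- The truncated one-dimensional integrals converge to half of the constant `λ`. -/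
lemma ker1_tendsto {p S S0 β : ℝ} (hp : 1 < p) (hS : 0 < S) (hSp : S < p) (hS0 : S0 * p = S)
    (h1 : -1 < β * (p - 1)) (h2 : β * (p - 1) < S) :
    Tendsto (fun ρ => 2 * ∫ b, ker1 p S β ρ 1 b) (𝓝[<] 1) (𝓝 (lamGen p S0 β)) := by
  have hi := lamInt_integrable hp hS hSp h1 h2
  have hc := intervalIntegral.continuousOn_primitive_interval (a := 0) (b := 1)
    (μ := volume) (f := lamInt p S β) (by rwa [Set.uIcc_of_le zero_le_one])
  rw [Set.uIcc_of_le zero_le_one] at hc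
  have ht := (hc 1 (by simp)).mono_left (nhdsWithin_mono 1
    (show Set.Ioo (0 : ℝ) 1 ⊆ Set.Icc 0 1 from Set.Ioo_subset_Icc_self))
  rw [nhdsWithin_Ioo_eq_nhdsLT one_pos] at ht
  have ht2 := (ht.const_add (1 / S)).const_mul 2
  have hval : 2 * (1 / S + ∫ τ in (0 : ℝ)..1, lamInt p S β τ) = lamGen p S0 β := by
    rw [intervalIntegral.integral_of_le zero_le_one, integral_Ioc_eq_integral_Ioo, lamGen, hS0]
    unfold lamInt
    ring
  rw [hval] at ht2
  refine ht2.congr' ?_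
  filter_upwards [Ioo_mem_nhdsLT (show (0 : ℝ) < 1 from one_pos)] with ρ hρ
  rw [(ker1_integral hp hS h1 h2 hρ.1 hρ.2).2, intervalIntegral.integral_of_le hρ.1.le]

/-! ### Integrability on pairs of points -/

/-- `kern_marginal_at` for signed integrands. -/
lemma kern_marginal_integral {n : ℕ} (hn : 1 ≤ n) {θ α : ℝ} (h1 : 0 < 2 * n + θ)
    (h2 : -1 < θ + α) (G : ℝ → ℝ) (hG : Measurable G) (ξ : Heis n) :
    ∫ ξ' : Heis n, G (x1 ξ') * kern θ α (Hmul (Hinv ξ) ξ') =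
      2 * sphereArea (2 * n - 1) * calI (2 * n) θ α *
        ∫ b, G b * |b - x1 ξ| ^ (-(1 + θ + α)) := by
  set k1 : Heis n → ℝ≥0∞ := fun ξ' => ENNReal.ofReal (kern θ α (Hmul (Hinv ξ) ξ')) with hk1
  set k2 : ℝ → ℝ≥0∞ := fun b => ENNReal.ofReal (|b - x1 ξ| ^ (-(1 + θ + α))) with hk2
  have m1 : Measurable k1 := by rw [hk1]; fun_prop
  have m2 : Measurable k2 := by rw [hk2]; fun_prop
  set c : ℝ := 2 * sphereArea (2 * n - 1) * calI (2 * n) θ α with hc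
  -- The pushforward under `x₁` of the measure with density the kernel is explicit.
  have hmap : Measure.map x1 ((volume : Measure (Heis n)).withDensity k1) =
      ENNReal.ofReal c • (volume : Measure ℝ).withDensity k2 := by
    ext S hS
    rw [Measure.map_apply measurable_x1 hS, withDensity_apply _ (measurable_x1 hS),
      Measure.smul_apply, withDensity_apply _ hS, smul_eq_mul,
      ← lintegral_indicator (measurable_x1 hS), ← lintegral_indicator hS]
    have := kern_marginal_at hn h1 h2 (S.indicator 1) (measurable_one.indicator hS) ξ
    have t1 : ∫⁻ ξ' : Heis n, (x1 ⁻¹' S).indicator k1 ξ' = ∫⁻ ξ' : Heis n, S.indicator 1 (x1 ξ') *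
        ENNReal.ofReal (kern θ α (Hmul (Hinv ξ) ξ')) :=
      lintegral_congr fun ξ' => by
        by_cases h : x1 ξ' ∈ S <;> simp [Set.indicator, hk1, h]
    have t2 : ∫⁻ b, S.indicator k2 b = ∫⁻ b, S.indicator 1 b *
        ENNReal.ofReal (|b - x1 ξ| ^ (-(1 + θ + α))) :=
      lintegral_congr fun b => by
        by_cases h : b ∈ S <;> simp [Set.indicator, hk2, h]
    rw [t1, t2]
    exact this
  have e1 : ∫ ξ' : Heis n, G (x1 ξ') * kern θ α (Hmul (Hinv ξ) ξ') =
      ∫ ξ', G (x1 ξ') ∂(volume.withDensity k1) := by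
    rw [integral_withDensity_eq_integral_toReal_smul m1 (ae_of_all _ fun _ => ENNReal.ofReal_lt_top)]
    congr 1; ext ξ'
    rw [hk1, ENNReal.toReal_ofReal (kern_nonneg _ _ _), smul_eq_mul, mul_comm]
  have e2 : ∫ b, G b * |b - x1 ξ| ^ (-(1 + θ + α)) = ∫ b, G b ∂(volume.withDensity k2) := by
    rw [integral_withDensity_eq_integral_toReal_smul m2 (ae_of_all _ fun _ => ENNReal.ofReal_lt_top)]
    congr 1; ext b
    rw [hk2, ENNReal.toReal_ofReal (by positivity), smul_eq_mul, mul_comm]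
  rw [e1, e2, ← integral_map measurable_x1.aemeasurable hG.aestronglyMeasurable, hmap,
    integral_smul_measure, ENNReal.toReal_ofReal (const_nonneg _ _), smul_eq_mul]

/-- Indicator of the truncation, as a real-valued function of a pair of points. -/
def chi {n : ℕ} (ρ : ℝ) (q : Heis n × Heis n) : ℝ :=
  (trunc ρ).indicator (fun _ => 1) (x1 q.1, x1 q.2)

/-- The kernel of the operator, as a function of a pair of points. -/
def kpair {n : ℕ} (θ α : ℝ) (q : Heis n × Heis n) : ℝ := kern θ α (Hmul (Hinv q.1) q.2)

@[fun_prop] lemma measurable_chi {n : ℕ} (ρ : ℝ) : Measurable (chi ρ : Heis n × Heis n → ℝ) := by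
  unfold chi
  exact (measurable_const.indicator (measurableSet_trunc ρ)).comp (by fun_prop)

@[fun_prop] lemma measurable_kpair {n : ℕ} (θ α : ℝ) :
    Measurable (kpair θ α : Heis n × Heis n → ℝ) := by
  unfold kpair; fun_prop

lemma chi_nonneg {n : ℕ} (ρ : ℝ) (q : Heis n × Heis n) : 0 ≤ chi ρ q :=
  Set.indicator_nonneg (fun _ _ => zero_le_one) _

lemma chi_le_one {n : ℕ} (ρ : ℝ) (q : Heis n × Heis n) : chi ρ q ≤ 1 :=
  Set.indicator_le_self' (fun _ _ => zero_le_one) _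

lemma kpair_nonneg {n : ℕ} (θ α : ℝ) (q : Heis n × Heis n) : 0 ≤ kpair θ α q := kern_nonneg _ _ _

lemma chi_swap {n : ℕ} (ρ : ℝ) (q : Heis n × Heis n) : chi ρ q.swap = chi ρ q := by
  unfold chi
  by_cases h : (x1 q.1, x1 q.2) ∈ trunc ρ
  · rw [Set.indicator_of_mem h, Set.indicator_of_mem (show (x1 q.swap.1, x1 q.swap.2) ∈ trunc ρ from
      (trunc_symm ρ _ _).1 h)]
  · rw [Set.indicator_of_notMem h, Set.indicator_of_notMem
      (show (x1 q.swap.1, x1 q.swap.2) ∉ trunc ρ from fun h' => h ((trunc_symm ρ _ _).1 h'))]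

lemma kpair_swap {n : ℕ} (θ α : ℝ) (q : Heis n × Heis n) : kpair θ α q.swap = kpair θ α q :=
  kern_symm _ _ _ _

lemma maj_eq {n : ℕ} (p S β ρ : ℝ) (q : Heis n × Heis n) :
    maj p S β ρ (x1 q.1) (x1 q.2) = chi ρ q * (x1 q.1 ^ (β * (p - 1)) + prof β (x1 q.2) ^ (p - 1)) *
      |x1 q.2 - x1 q.1| ^ (-(1 + S)) := by
  unfold maj chi
  by_cases h : (x1 q.1, x1 q.2) ∈ trunc ρ <;> simp [h]

/-- The majorant of the truncated integrand on `ℍⁿ × ℍⁿ`. -/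
lemma integrable_majorant {n : ℕ} (hn : 1 ≤ n) {p θ α β ρ δ R : ℝ} (hp : 1 < p) (hθ : 0 < θ)
    (hα : 0 ≤ α) (h1 : -1 < β * (p - 1)) (h2 : β * (p - 1) < θ + α) (hρ0 : 0 < ρ) (hρ1 : ρ < 1)
    (hδ : 0 < δ) {φ : Heis n → ℝ} (hφm : Measurable φ) (hφ0 : ∀ ξ, 0 ≤ φ ξ) (hφi : Integrable φ)
    (hφs : ∀ ξ, φ ξ ≠ 0 → δ ≤ x1 ξ ∧ x1 ξ ≤ R) :
    Integrable (fun q : Heis n × Heis n => chi ρ q *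
      (x1 q.1 ^ (β * (p - 1)) + prof β (x1 q.2) ^ (p - 1)) * φ q.1 * kpair θ α q) := by
  set f : Heis n × Heis n → ℝ := fun q => chi ρ q *
      (x1 q.1 ^ (β * (p - 1)) + prof β (x1 q.2) ^ (p - 1)) * φ q.1 * kpair θ α q with hf
  have hfm : Measurable f := by rw [hf]; fun_prop
  have hf0 : ∀ q, 0 ≤ f q := by
    intro q
    rw [hf]
    simp only
    by_cases h : φ q.1 = 0
    · simp [h]
    · have hx : 0 < x1 q.1 := hδ.trans_le (hφs _ h).1
      have := chi_nonneg ρ q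
      have := kpair_nonneg θ α q
      have := hφ0 q.1
      have := prof_nonneg β (x1 q.2)
      positivity
  refine ⟨hfm.aestronglyMeasurable, ?_⟩
  rw [hasFiniteIntegral_iff_ofReal (ae_of_all _ hf0), Measure.volume_eq_prod,
    lintegral_prod _ (by fun_prop)]
  set c : ℝ := 2 * sphereArea (2 * n - 1) * calI (2 * n) θ α with hc
  have hM := integrable_maj_one (ρ := ρ) hp (by linarith) h1 h2 hρ0 hρ1
  set κ := β * (p - 1) with hκ
  have hmaj0 : 0 ≤ ∫ τ, maj p (θ + α) β ρ 1 τ := by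
    apply integral_nonneg
    intro τ
    exact (abs_nonneg _).trans (abs_ker1_le hp one_pos)
  -- The exponent `κ - (θ + α)` of the scaled inner integral is negative: the worst height is `δ`.
  have hbound : ∀ ξ, ∫⁻ ξ', ENNReal.ofReal (f (ξ, ξ')) ≤
      ENNReal.ofReal (φ ξ) * (ENNReal.ofReal c *
        ENNReal.ofReal (δ ^ (κ - (θ + α)) * ∫ τ, maj p (θ + α) β ρ 1 τ)) := by
    intro ξ
    by_cases h : φ ξ = 0
    · simp [hf, h]
    have hx : 0 < x1 ξ := hδ.trans_le (hφs _ h).1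
    have e1 : ∀ ξ', ENNReal.ofReal (f (ξ, ξ')) = ENNReal.ofReal (φ ξ) *
        ((fun b => ENNReal.ofReal ((trunc ρ).indicator (fun _ => 1) (x1 ξ, b) *
          (x1 ξ ^ κ + prof β b ^ (p - 1)))) (x1 ξ') *
        ENNReal.ofReal (kern θ α (Hmul (Hinv ξ) ξ'))) := by
      intro ξ'
      have := prof_nonneg β (x1 ξ')
      simp only [hf, chi, kpair]
      rw [← ENNReal.ofReal_mul (mul_nonneg (Set.indicator_nonneg (fun _ _ => zero_le_one) _)
          (by positivity)), ← ENNReal.ofReal_mul (hφ0 ξ)]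
      congr 1
      ring
    have mm : Measurable (fun b => ENNReal.ofReal ((trunc ρ).indicator (fun _ => (1 : ℝ)) (x1 ξ, b) *
          (x1 ξ ^ κ + prof β b ^ (p - 1)))) := by
      have : Measurable (fun b => (trunc ρ).indicator (fun _ => (1 : ℝ)) (x1 ξ, b)) :=
        (measurable_const.indicator (measurableSet_trunc ρ)).comp measurable_prodMk_left
      fun_prop
    have mm2 : Measurable fun ξ' : Heis n => (fun b => ENNReal.ofReal
        ((trunc ρ).indicator (fun _ => (1 : ℝ)) (x1 ξ, b) * (x1 ξ ^ κ + prof β b ^ (p - 1)))) (x1 ξ') *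
        ENNReal.ofReal (kern θ α (Hmul (Hinv ξ) ξ')) := (mm.comp measurable_x1).mul (by fun_prop)
    rw [lintegral_congr e1, lintegral_const_mul _ mm2,
      kern_marginal_at hn (by positivity) (by linarith) _ mm ξ]
    gcongr
    have e2 : ∀ b, ENNReal.ofReal ((trunc ρ).indicator (fun _ => (1 : ℝ)) (x1 ξ, b) *
          (x1 ξ ^ κ + prof β b ^ (p - 1))) * ENNReal.ofReal (|b - x1 ξ| ^ (-(1 + θ + α))) =
        ENNReal.ofReal (maj p (θ + α) β ρ (x1 ξ) b) := by
      intro b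
      rw [← ENNReal.ofReal_mul' (by positivity)]
      unfold maj
      rw [hκ]
      by_cases h : (x1 ξ, b) ∈ trunc ρ <;> simp [h, add_assoc]
    simp_rw [e2]
    have hsc := fun τ => maj_mul (p := p) (S := θ + α) (β := β) (ρ := ρ) hp hx τ
    rw [← ofReal_integral_eq_lintegral_ofReal (integrable_of_scaling hx hsc hM)
      (ae_of_all _ fun b => (abs_nonneg _).trans (abs_ker1_le hp hx)),
      integral_of_scaling (κ := κ - (θ + α)) hx (fun τ => by
        rw [hsc τ, hκ]; congr 2; ring)]
    exact ENNReal.ofReal_le_ofReal (mul_le_mul_of_nonneg_right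
      (Real.rpow_le_rpow_of_nonpos hδ (hφs _ h).1 (by linarith)) hmaj0)
  refine (lintegral_mono hbound).trans_lt ?_
  rw [lintegral_mul_const _ (by fun_prop)]
  refine ENNReal.mul_lt_top ?_ (ENNReal.mul_lt_top ENNReal.ofReal_lt_top ENNReal.ofReal_lt_top)
  exact (hasFiniteIntegral_iff_ofReal (ae_of_all _ hφ0)).1 hφi.2

/-- The `p`-energy of `u` over the pairs close to the diagonal with first point in a compact set
is finite as soon as `|u(ξ) - u(ξ')|^p ≲ d^q` for a `q` slightly larger than `θ + α`. -/
lemma integrable_near {n : ℕ} (hn : 1 ≤ n) {p θ α q C R : ℝ} (hθ : 0 < θ) (hα : 0 ≤ α)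
    (hq1 : θ + α < q)
    (hq2 : q < θ + α + 1) (hq3 : q < θ + 2 * n) (hC : 0 ≤ C) {u : Heis n → ℝ} (hu : Measurable u)
    {K : Set (Heis n)} (hK : IsCompact K) (hKx : ∀ ξ ∈ K, 0 < x1 ξ ∧ x1 ξ ≤ R)
    (hnear : ∀ ξ ∈ K, ∀ ξ', (x1 ξ, x1 ξ') ∉ trunc (1 / 2) →
      |u ξ - u ξ'| ^ p ≤ C * hd (Hmul (Hinv ξ) ξ') ^ q) :
    Integrable (fun r : Heis n × Heis n => K.indicator (fun _ => (1 : ℝ)) r.1 *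
      (1 - chi (1 / 2) r) * |u r.1 - u r.2| ^ p * kpair θ α r) := by
  have hKm : MeasurableSet K := hK.isClosed.measurableSet
  have hind : Measurable (K.indicator (fun _ => (1 : ℝ))) := measurable_const.indicator hKm
  set f : Heis n × Heis n → ℝ := fun r => K.indicator (fun _ => (1 : ℝ)) r.1 *
      (1 - chi (1 / 2) r) * |u r.1 - u r.2| ^ p * kpair θ α r with hf
  have hfm : Measurable f := by rw [hf]; fun_prop
  have hf0 : ∀ r, 0 ≤ f r := by
    intro r
    have h1 : 0 ≤ 1 - chi (1 / 2) r := by linarith [chi_le_one (1 / 2) r]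
    have h2 := kpair_nonneg θ α r
    have h3 : 0 ≤ K.indicator (fun _ => (1 : ℝ)) r.1 :=
      Set.indicator_nonneg (fun _ _ => zero_le_one) _
    rw [hf]; positivity
  refine ⟨hfm.aestronglyMeasurable, ?_⟩
  rw [hasFiniteIntegral_iff_ofReal (ae_of_all _ hf0), Measure.volume_eq_prod,
    lintegral_prod _ (by fun_prop)]
  set c : ℝ := 2 * sphereArea (2 * n - 1) * calI (2 * n) (θ - q) α with hc
  -- The factor `d^q` turns the kernel of order `θ` into the kernel of order `θ - q`, whose marginal
  -- is integrable at `0`; the truncation confines `x₁ - x₁'` to `[-R, R]`.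
  set g : ℝ → ℝ≥0∞ := fun a => (Set.Icc (-R) R).indicator 1 a *
    ENNReal.ofReal (|a| ^ (-(1 + (θ - q) + α))) with hg
  have hI : ∫⁻ a, g a < ⊤ := by
    have e : g = (Set.Icc (-R) R).indicator
        (fun a => ENNReal.ofReal (|a| ^ (-(1 + (θ - q) + α)))) := by
      ext a
      by_cases h : a ∈ Set.Icc (-R) R <;> simp [hg, h]
    rw [e, lintegral_indicator measurableSet_Icc]
    have hint : IntegrableOn (fun a : ℝ => |a| ^ (-(1 + (θ - q) + α))) (Set.Icc (-R) R) := by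
      rcases lt_or_ge R 0 with hR | hR
      · rw [Set.Icc_eq_empty (by linarith)]; exact integrableOn_empty
      have p1 : IntervalIntegrable (fun a : ℝ => |a| ^ (-(1 + (θ - q) + α))) volume 0 R := by
        have := intervalIntegral.intervalIntegrable_rpow' (a := 0) (b := R)
          (r := -(1 + (θ - q) + α)) (by linarith)
        refine this.congr ?_
        intro a ha
        rw [Set.uIoc_of_le hR] at ha
        simp only
        rw [abs_of_pos ha.1]
      have p2 := ((IntervalIntegrable.iff_comp_neg (by simp)).1 p1).symm
      simp only [abs_neg, neg_zero] at p2
      have := p2.trans p1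
      rwa [intervalIntegrable_iff_integrableOn_Icc_of_le (by linarith)] at this
    exact (hasFiniteIntegral_iff_ofReal (ae_of_all _ fun a => by positivity)).1 hint.2
  have hbound : ∀ ξ, ∫⁻ ξ', ENNReal.ofReal (f (ξ, ξ')) ≤
      K.indicator (fun _ => ENNReal.ofReal C * (ENNReal.ofReal c * ∫⁻ a, g a)) ξ := by
    intro ξ
    by_cases hξ : ξ ∈ K
    swap
    · simp [hf, hξ]
    rw [Set.indicator_of_mem hξ]
    have e1 : ∀ ξ', ENNReal.ofReal (f (ξ, ξ')) ≤ ENNReal.ofReal C *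
        ((fun b => (Set.Icc (-R) R).indicator 1 (b - x1 ξ)) (x1 ξ') *
        ENNReal.ofReal (kern (θ - q) α (Hmul (Hinv ξ) ξ'))) := by
      intro ξ'
      rw [hf]
      simp only [chi, kpair, Set.indicator_of_mem hξ, one_mul]
      by_cases ht : (x1 ξ, x1 ξ') ∈ trunc (1 / 2)
      · rw [Set.indicator_of_mem ht]; simp
      have hb : x1 ξ' - x1 ξ ∈ Set.Icc (-R) R := by
        have := hKx ξ hξ
        simp only [trunc, Set.mem_ofPred_eq, not_or, not_le] at ht
        constructor <;> linarith
      rw [Set.indicator_of_notMem ht, Set.indicator_of_mem hb, sub_zero, one_mul, Pi.one_apply,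
        one_mul, ← ENNReal.ofReal_mul hC]
      apply ENNReal.ofReal_le_ofReal
      set η := Hmul (Hinv ξ) ξ'
      have hk0 := kern_nonneg θ α η
      calc _ ≤ C * hd η ^ q * kern θ α η := by
            gcongr
            exact hnear ξ hξ ξ' ht
        _ = C * (hd η ^ q * kern θ α η) := by ring
        _ ≤ _ := by
            gcongr
            have hd0 : 0 ≤ hd η := by have := zsq_nonneg η; unfold hd; positivity
            rcases hd0.eq_or_lt with h | h
            · rw [← h, Real.zero_rpow (by linarith), zero_mul]
              exact kern_nonneg _ _ _
            · apply le_of_eq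
              unfold kern
              rw [show hQ n + (θ - q) = (hQ n + θ) - q by ring, Real.rpow_sub h]
              field_simp
    refine (lintegral_mono e1).trans ?_
    have mm : Measurable (fun b => (Set.Icc (-R) R).indicator (1 : ℝ → ℝ≥0∞) (b - x1 ξ)) :=
      (measurable_one.indicator measurableSet_Icc).comp (by fun_prop)
    have mm2 : Measurable fun ξ' : Heis n =>
        (fun b => (Set.Icc (-R) R).indicator (1 : ℝ → ℝ≥0∞) (b - x1 ξ)) (x1 ξ') *
        ENNReal.ofReal (kern (θ - q) α (Hmul (Hinv ξ) ξ')) :=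
      (mm.comp measurable_x1).mul (by fun_prop)
    rw [lintegral_const_mul _ mm2,
      kern_marginal_at hn (by linarith) (by linarith) _ mm ξ]
    have hgm : Measurable g :=
      (measurable_one.indicator measurableSet_Icc).mul (by fun_prop)
    rw [← (measurePreserving_sub_right (volume : Measure ℝ) (x1 ξ)).lintegral_comp hgm]
  refine (lintegral_mono hbound).trans_lt ?_
  rw [lintegral_indicator hKm, setLIntegral_const]
  exact ENNReal.mul_lt_top (ENNReal.mul_lt_top ENNReal.ofReal_lt_top
    (ENNReal.mul_lt_top ENNReal.ofReal_lt_top hI)) hK.measure_lt_top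

/-! ### The truncated form and its limit -/

/-- The integrand of the weak formulation, on pairs of points. -/
def wform {n : ℕ} (p θ α : ℝ) (u φ : Heis n → ℝ) (q : Heis n × Heis n) : ℝ :=
  Jp p (u q.1 - u q.2) * (φ q.1 - φ q.2) * kpair θ α q

/-- The truncation being symmetric, each of the two terms of `φ(ξ) - φ(ξ')` gives the same integral
after exchanging `ξ` and `ξ'`. -/
lemma chi_mul_wform {n : ℕ} (p θ α ρ : ℝ) (u φ : Heis n → ℝ) (q : Heis n × Heis n) :
    chi ρ q * wform p θ α u φ q =
      chi ρ q * Jp p (u q.1 - u q.2) * φ q.1 * kpair θ α q +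
        chi ρ q.swap * Jp p (u q.swap.1 - u q.swap.2) * φ q.swap.1 * kpair θ α q.swap := by
  have e : Jp p (u q.2 - u q.1) = -Jp p (u q.1 - u q.2) := by rw [← Jp_neg, neg_sub]
  rw [chi_swap, kpair_swap, wform, Prod.fst_swap, Prod.snd_swap, e]
  ring

lemma integrable_swap {n : ℕ} {f : Heis n × Heis n → ℝ} (hf : Integrable f) :
    Integrable (fun q : Heis n × Heis n => f q.swap) :=
  (Measure.measurePreserving_swap (μ := (volume : Measure (Heis n)))
    (ν := (volume : Measure (Heis n)))).integrable_comp_of_integrable hf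

lemma integral_swap' {n : ℕ} (f : Heis n × Heis n → ℝ) :
    ∫ q : Heis n × Heis n, f q.swap = ∫ q : Heis n × Heis n, f q :=
  integral_prod_swap (μ := (volume : Measure (Heis n))) (ν := (volume : Measure (Heis n))) f

/-- Off the truncated diagonal, the integrand is dominated as soon as `u` lies between `0` and
the one-dimensional profile. -/
lemma integrable_truncated {n : ℕ} (hn : 1 ≤ n) {p θ α β ρ δ R : ℝ} (hp : 1 < p) (hθ : 0 < θ)
    (hα : 0 ≤ α) (h1 : -1 < β * (p - 1)) (h2 : β * (p - 1) < θ + α) (hρ0 : 0 < ρ) (hρ1 : ρ < 1)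
    (hδ : 0 < δ) {φ : Heis n → ℝ} (hφm : Measurable φ) (hφ0 : ∀ ξ, 0 ≤ φ ξ) (hφi : Integrable φ)
    (hφs : ∀ ξ, φ ξ ≠ 0 → δ ≤ x1 ξ ∧ x1 ξ ≤ R) {u : Heis n → ℝ} (hum : Measurable u)
    (hu0 : ∀ ξ, 0 ≤ u ξ) (hu : ∀ ξ, u ξ ≤ prof β (x1 ξ)) :
    Integrable (fun q : Heis n × Heis n =>
      chi ρ q * Jp p (u q.1 - u q.2) * φ q.1 * kpair θ α q) := by
  refine (integrable_majorant hn hp hθ hα h1 h2 hρ0 hρ1 hδ hφm hφ0 hφi hφs).mono'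
    (by apply Measurable.aestronglyMeasurable; fun_prop) (ae_of_all _ fun q => ?_)
  by_cases h : φ q.1 = 0
  · simp [h]
  have hx : 0 < x1 q.1 := hδ.trans_le (hφs _ h).1
  have hk := kpair_nonneg θ α q
  have hc := chi_nonneg ρ q
  have hf := hφ0 q.1
  rw [Real.norm_eq_abs, abs_mul, abs_mul, abs_mul, abs_of_nonneg hk, abs_of_nonneg hc,
    abs_of_nonneg hf]
  have a1 : u q.1 ^ (p - 1) ≤ x1 q.1 ^ (β * (p - 1)) := by
    have := Real.rpow_le_rpow (hu0 q.1) (hu q.1) (show 0 ≤ p - 1 by linarith)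
    rwa [prof_rpow _ _ _ hp, prof, if_pos hx] at this
  have a2 : u q.2 ^ (p - 1) ≤ prof β (x1 q.2) ^ (p - 1) :=
    Real.rpow_le_rpow (hu0 q.2) (hu q.2) (by linarith)
  have a3 := abs_Jp_sub_le hp (hu0 q.1) (hu0 q.2)
  have a4 : |Jp p (u q.1 - u q.2)| ≤ x1 q.1 ^ (β * (p - 1)) + prof β (x1 q.2) ^ (p - 1) := by
    linarith
  gcongr

/-- The truncated form is bounded below by the one of the untruncated profile, which the marginal
formula and scaling evaluate. -/
lemma truncated_le {n : ℕ} (hn : 1 ≤ n) {p θ α β ρ δ R : ℝ} (hp : 1 < p) (hθ : 0 < θ)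
    (hα : 0 ≤ α) (h1 : -1 < β * (p - 1)) (h2 : β * (p - 1) < θ + α) (hρ0 : 0 < ρ) (hρ1 : ρ < 1)
    (hδ : 0 < δ) {φ : Heis n → ℝ} (hφm : Measurable φ) (hφ0 : ∀ ξ, 0 ≤ φ ξ) (hφi : Integrable φ)
    (hφs : ∀ ξ, φ ξ ≠ 0 → δ ≤ x1 ξ ∧ x1 ξ ≤ R) {u : Heis n → ℝ} (hum : Measurable u)
    (hu0 : ∀ ξ, 0 ≤ u ξ) (hu : ∀ ξ, u ξ ≤ prof β (x1 ξ))
    (huφ : ∀ ξ, φ ξ ≠ 0 → u ξ = prof β (x1 ξ)) :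
    2 * sphereArea (2 * n - 1) * calI (2 * n) θ α * (2 * ∫ b, ker1 p (θ + α) β ρ 1 b) *
        (∫ ξ, φ ξ * x1 ξ ^ (β * (p - 1) - (θ + α))) ≤
      ∫ q : Heis n × Heis n, chi ρ q * wform p θ α u φ q := by
  set c : ℝ := 2 * sphereArea (2 * n - 1) * calI (2 * n) θ α with hc
  have hG := integrable_truncated hn hp hθ hα h1 h2 hρ0 hρ1 hδ hφm hφ0 hφi hφs hum hu0 hu
  have hH := integrable_truncated hn hp hθ hα h1 h2 hρ0 hρ1 hδ hφm hφ0 hφi hφs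
    (u := fun ξ => prof β (x1 ξ)) (by fun_prop) (fun _ => prof_nonneg _ _) fun _ => le_rfl
  simp_rw [chi_mul_wform]
  rw [integral_add hG (integrable_swap hG), integral_swap' (fun q =>
    chi ρ q * Jp p (u q.1 - u q.2) * φ q.1 * kpair θ α q)]
  -- Where `φ(ξ) ≠ 0`, `u(ξ)` equals the profile while `u(ξ')` is at most the profile.
  have hle : ∫ q : Heis n × Heis n, chi ρ q * Jp p (prof β (x1 q.1) - prof β (x1 q.2)) * φ q.1 *
      kpair θ α q ≤ ∫ q, chi ρ q * Jp p (u q.1 - u q.2) * φ q.1 * kpair θ α q := by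
    refine integral_mono hH hG fun q => ?_
    by_cases h : φ q.1 = 0
    · simp [h]
    have hk := kpair_nonneg θ α q
    have hc := chi_nonneg ρ q
    have hf := hφ0 q.1
    have : Jp p (prof β (x1 q.1) - prof β (x1 q.2)) ≤ Jp p (u q.1 - u q.2) :=
      Jp_mono hp (by linarith [huφ _ h, hu q.2])
    simp only
    gcongr
  have hval : ∫ q : Heis n × Heis n, chi ρ q * Jp p (prof β (x1 q.1) - prof β (x1 q.2)) * φ q.1 *
      kpair θ α q = c * (∫ b, ker1 p (θ + α) β ρ 1 b) *
        ∫ ξ, φ ξ * x1 ξ ^ (β * (p - 1) - (θ + α)) := by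
    rw [Measure.volume_eq_prod] at hH ⊢
    rw [integral_prod _ hH, ← integral_const_mul]
    congr 1
    ext ξ
    by_cases h : φ ξ = 0
    · simp [h]
    have hx : 0 < x1 ξ := hδ.trans_le (hφs _ h).1
    set g : ℝ → ℝ := fun b => (trunc ρ).indicator (fun _ => (1 : ℝ)) (x1 ξ, b) *
      Jp p (x1 ξ ^ β - prof β b) with hg
    have hgm : Measurable g := by
      have : Measurable (fun b => (trunc ρ).indicator (fun _ => (1 : ℝ)) (x1 ξ, b)) :=
        (measurable_const.indicator (measurableSet_trunc ρ)).comp measurable_prodMk_left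
      rw [hg]; fun_prop
    have e1 : ∀ ξ', chi ρ (ξ, ξ') * Jp p (prof β (x1 ξ) - prof β (x1 ξ')) * φ ξ *
        kpair θ α (ξ, ξ') = φ ξ * (g (x1 ξ') * kern θ α (Hmul (Hinv ξ) ξ')) := by
      intro ξ'
      simp only [hg, chi, kpair]
      rw [show prof β (x1 ξ) = x1 ξ ^ β by rw [prof, if_pos hx]]
      ring
    have e2 : ∀ b, g b * |b - x1 ξ| ^ (-(1 + θ + α)) = ker1 p (θ + α) β ρ (x1 ξ) b := by
      intro b
      unfold ker1
      by_cases h : (x1 ξ, b) ∈ trunc ρ <;> simp [hg, h, add_assoc]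
    simp only
    simp_rw [e1]
    rw [integral_const_mul, kern_marginal_integral hn (by positivity) (by linarith) g hgm]
    simp_rw [e2]
    rw [integral_of_scaling (κ := β * (p - 1) - (θ + α)) hx (fun τ => by
      rw [ker1_mul hp hx τ]; congr 2; ring)]
    ring
  rw [hval] at hle
  linarith

lemma ae_x1_ne {n : ℕ} (hn : 1 ≤ n) : ∀ᵐ q : Heis n × Heis n, x1 q.1 ≠ x1 q.2 := by
  have h0 : ∀ c : ℝ, ∀ᵐ ξ : Heis n, c ≠ x1 ξ := by
    intro c
    have h := Measure.pi_hyperplane (fun _ : Fin n => (volume : Measure ℝ)) ⟨0, hn⟩ c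
    have h' := (Measure.quasiMeasurePreserving_fst (μ := (volume : Measure (Fin n → ℝ)))
      (ν := (volume : Measure ((Fin n → ℝ) × ℝ)))).preimage_null h
    rw [ae_iff]
    refine measure_mono_null ?_ h'
    intro ξ hξ
    simp only [ne_eq, not_not, Set.mem_ofPred_eq, x1, dif_pos (show 0 < n from hn)] at hξ
    exact hξ.symm
  rw [Measure.volume_eq_prod, Measure.ae_prod_iff_ae_ae]
  · exact ae_of_all _ fun ξ => h0 (x1 ξ)
  · exact (measurableSet_eq_fun (f := fun q : Heis n × Heis n => x1 q.1) (by fun_prop)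
      (g := fun q : Heis n × Heis n => x1 q.2) (by fun_prop)).compl

lemma rpow_mul_le_add {p a b : ℝ} (hp : 1 < p) (ha : 0 ≤ a) (hb : 0 ≤ b) :
    a ^ (p - 1) * b ≤ a ^ p + b ^ p := by
  have h : ∀ c : ℝ, 0 ≤ c → c ^ (p - 1) * c = c ^ p := by
    intro c hc
    rw [← Real.rpow_add_one' hc (by linarith)]; congr 1; ring
  have h1 : 0 ≤ a ^ p := by positivity
  have h2 : 0 ≤ b ^ p := by positivity
  rcases le_total a b with h' | h'
  · have : a ^ (p - 1) * b ≤ b ^ (p - 1) * b := by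
      gcongr
    linarith [h b hb]
  · have : a ^ (p - 1) * b ≤ a ^ (p - 1) * a := by gcongr
    linarith [h a ha]

/-- Far from the diagonal this is `integrable_truncated`; near the diagonal,
`|u(ξ)-u(ξ')|^{p-1} |φ(ξ)-φ(ξ')|` is bounded by the sum of the `p`-th powers, and the support of `φ`
forces one of the two points into `K`. -/
lemma integrable_wform {n : ℕ} (hn : 1 ≤ n) {p θ α β δ R : ℝ} (hp : 1 < p) (hθ : 0 < θ)
    (hα : 0 ≤ α) (h1 : -1 < β * (p - 1)) (h2 : β * (p - 1) < θ + α)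
    (hδ : 0 < δ) {φ : Heis n → ℝ} (hφm : Measurable φ) (hφ0 : ∀ ξ, 0 ≤ φ ξ) (hφi : Integrable φ)
    (hφs : ∀ ξ, φ ξ ≠ 0 → δ ≤ x1 ξ ∧ x1 ξ ≤ R) {u : Heis n → ℝ} (hum : Measurable u)
    (hu0 : ∀ ξ, 0 ≤ u ξ) (hu : ∀ ξ, u ξ ≤ prof β (x1 ξ)) {K : Set (Heis n)}
    (hφK : ∀ ξ, φ ξ ≠ 0 → ξ ∈ K)
    (hW : Integrable (fun r : Heis n × Heis n => K.indicator (fun _ => (1 : ℝ)) r.1 *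
      (1 - chi (1 / 2) r) * |u r.1 - u r.2| ^ p * kpair θ α r))
    (hφg : Integrable (fun r : Heis n × Heis n => |φ r.1 - φ r.2| ^ p * kpair θ α r)) :
    Integrable (wform p θ α u φ) := by
  have hFm : Measurable (wform p θ α u φ) := by unfold wform; fun_prop
  have hG := integrable_truncated (ρ := 1 / 2) hn hp hθ hα h1 h2 (by norm_num) (by norm_num) hδ
    hφm hφ0 hφi hφs hum hu0 hu
  have i1 : Integrable (fun q => chi (1 / 2) q * wform p θ α u φ q) := by
    simp_rw [chi_mul_wform]
    exact hG.add (integrable_swap hG)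
  have i2 : Integrable (fun q => (1 - chi (1 / 2) q) * wform p θ α u φ q) := by
    refine ((hW.add (integrable_swap hW)).add hφg).mono'
      (by apply Measurable.aestronglyMeasurable; fun_prop) (ae_of_all _ fun q => ?_)
    have hk := kpair_nonneg θ α q
    have hc : 0 ≤ 1 - chi (1 / 2) q := by linarith [chi_le_one (1 / 2) q]
    have hc' : 1 - chi (1 / 2) q ≤ 1 := by linarith [chi_nonneg (1 / 2) q]
    have hi : ∀ ξ, 0 ≤ K.indicator (fun _ => (1 : ℝ)) ξ := fun ξ =>
      Set.indicator_nonneg (fun _ _ => zero_le_one) _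
    simp only [Pi.add_apply]
    rw [chi_swap, kpair_swap, Prod.fst_swap, Prod.snd_swap, abs_sub_comm (u q.2)]
    set A := |u q.1 - u q.2| with hA
    set B := |φ q.1 - φ q.2| with hB
    set k := kpair θ α q
    set I1 := K.indicator (fun _ => (1 : ℝ)) q.1 with hI1
    set I2 := K.indicator (fun _ => (1 : ℝ)) q.2 with hI2
    have hA0 : 0 ≤ A := abs_nonneg _
    have hB0 : 0 ≤ B := abs_nonneg _
    have e : ‖(1 - chi (1 / 2) q) * wform p θ α u φ q‖ =
        (1 - chi (1 / 2) q) * (A ^ (p - 1) * B * k) := by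
      rw [wform, Real.norm_eq_abs, abs_mul, abs_mul, abs_mul, abs_Jp hp, abs_of_nonneg hk,
        abs_of_nonneg hc]
    rw [e]
    by_cases hq : φ q.1 = 0 ∧ φ q.2 = 0
    · have : B = 0 := by rw [hB, hq.1, hq.2]; simp
      rw [this]
      have := hi q.1
      have := hi q.2
      simp only [mul_zero, zero_mul]
      positivity
    have hI : 1 ≤ I1 + I2 := by
      rcases not_and_or.1 hq with h | h
      · have : I1 = 1 := by rw [hI1, Set.indicator_of_mem (hφK _ h)]
        linarith [hi q.2]
      · have : I2 = 1 := by rw [hI2, Set.indicator_of_mem (hφK _ h)]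
        linarith [hi q.1]
    have hAp : 0 ≤ A ^ p := by positivity
    have hBp : 0 ≤ B ^ p := by positivity
    set x := 1 - chi (1 / 2) q
    have y := rpow_mul_le_add hp hA0 hB0
    calc x * (A ^ (p - 1) * B * k) ≤ x * ((A ^ p + B ^ p) * k) := by gcongr
      _ = 1 * (x * A ^ p * k) + x * (B ^ p * k) := by ring
      _ ≤ (I1 + I2) * (x * A ^ p * k) + 1 * (B ^ p * k) := by gcongr
      _ = _ := by ring
  refine (i1.add i2).congr (ae_of_all _ fun q => ?_)
  simp only [Pi.add_apply]
  ring

/-- Letting the truncation ratio tend to `1` in `truncated_le`. -/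
lemma core_le {n : ℕ} (hn : 1 ≤ n) {p θ α β δ R S0 : ℝ} (hp : 1 < p) (hθ : 0 < θ)
    (hα : 0 ≤ α) (hSp : θ + α < p) (hS0 : S0 * p = θ + α)
    (h1 : -1 < β * (p - 1)) (h2 : β * (p - 1) < θ + α)
    (hδ : 0 < δ) {φ : Heis n → ℝ} (hφm : Measurable φ) (hφ0 : ∀ ξ, 0 ≤ φ ξ) (hφi : Integrable φ)
    (hφs : ∀ ξ, φ ξ ≠ 0 → δ ≤ x1 ξ ∧ x1 ξ ≤ R) {u : Heis n → ℝ} (hum : Measurable u)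
    (hu0 : ∀ ξ, 0 ≤ u ξ) (hu : ∀ ξ, u ξ ≤ prof β (x1 ξ))
    (huφ : ∀ ξ, φ ξ ≠ 0 → u ξ = prof β (x1 ξ)) (hF : Integrable (wform p θ α u φ)) :
    2 * sphereArea (2 * n - 1) * calI (2 * n) θ α * lamGen p S0 β *
        (∫ ξ, φ ξ * x1 ξ ^ (β * (p - 1) - (θ + α))) ≤
      ∫ q : Heis n × Heis n, wform p θ α u φ q := by
  have lim1 := ((ker1_tendsto hp (by linarith) hSp hS0 h1 h2).const_mul
    (2 * sphereArea (2 * n - 1) * calI (2 * n) θ α)).mul_const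
    (∫ ξ, φ ξ * x1 ξ ^ (β * (p - 1) - (θ + α)))
  have lim2 : Tendsto (fun ρ => ∫ q : Heis n × Heis n, chi ρ q * wform p θ α u φ q) (𝓝[<] 1)
      (𝓝 (∫ q : Heis n × Heis n, wform p θ α u φ q)) := by
    have hFm : Measurable (wform p θ α u φ) := by unfold wform; fun_prop
    refine tendsto_integral_filter_of_dominated_convergence (fun q => ‖wform p θ α u φ q‖)
      (Eventually.of_forall fun ρ => by apply Measurable.aestronglyMeasurable; fun_prop)
      (Eventually.of_forall fun ρ => ae_of_all _ fun q => ?_) hF.norm ?_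
    · rw [norm_mul, Real.norm_of_nonneg (chi_nonneg ρ q)]
      exact mul_le_of_le_one_left (norm_nonneg _) (chi_le_one ρ q)
    · filter_upwards [ae_x1_ne hn] with q hq
      refine tendsto_const_nhds.congr' ?_
      filter_upwards [trunc_eventually hq] with ρ hρ
      rw [chi, Set.indicator_of_mem hρ, one_mul]
  refine le_of_tendsto_of_tendsto lim1 lim2 ?_
  filter_upwards [Ioo_mem_nhdsLT (show (0 : ℝ) < 1 by norm_num)] with ρ hρ
  exact truncated_le hn hp hθ hα h1 h2 hρ.1 hρ.2 hδ hφm hφ0 hφi hφs hum hu0 hu huφ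

/-! ### Lipschitz bound near the diagonal -/

lemma hd_sq {n : ℕ} (η : Heis n) : hd η ^ 2 = √(zsq η ^ 2 + η.2.2 ^ 2) := by
  rw [hd, Real.sqrt_eq_rpow, ← Real.rpow_natCast, ← Real.rpow_mul (by positivity)]
  norm_num

lemma hd_nonneg {n : ℕ} (η : Heis n) : 0 ≤ hd η := by unfold hd; positivity

lemma zsq_le_hd {n : ℕ} (η : Heis n) : zsq η ≤ hd η ^ 2 := by
  rw [hd_sq]; exact Real.le_sqrt_of_sq_le (by nlinarith [sq_nonneg η.2.2])

lemma abs_t_le_hd {n : ℕ} (η : Heis n) : |η.2.2| ≤ hd η ^ 2 := by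
  rw [hd_sq]; exact Real.abs_le_sqrt (by nlinarith [sq_nonneg (zsq η)])

lemma abs_x_le_hd {n : ℕ} (η : Heis n) (i : Fin n) : |η.1 i| ≤ hd η := by
  refine abs_le_of_sq_le_sq ?_ (hd_nonneg η)
  refine le_trans ?_ (zsq_le_hd η)
  have h1 := Finset.single_le_sum (f := fun i => η.1 i ^ 2) (fun i _ => sq_nonneg _)
    (Finset.mem_univ i)
  have h2 : 0 ≤ ∑ i, η.2.1 i ^ 2 := Finset.sum_nonneg fun i _ => sq_nonneg _
  unfold zsq
  linarith

lemma abs_y_le_hd {n : ℕ} (η : Heis n) (i : Fin n) : |η.2.1 i| ≤ hd η := by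
  refine abs_le_of_sq_le_sq ?_ (hd_nonneg η)
  refine le_trans ?_ (zsq_le_hd η)
  have h1 := Finset.single_le_sum (f := fun i => η.2.1 i ^ 2) (fun i _ => sq_nonneg _)
    (Finset.mem_univ i)
  have h2 : 0 ≤ ∑ i, η.1 i ^ 2 := Finset.sum_nonneg fun i _ => sq_nonneg _
  unfold zsq
  linarith

/-- Locally, the sup distance is controlled by the gauge distance. -/
lemma norm_sub_le_hd {n : ℕ} {R : ℝ} (hR : 0 ≤ R) {ξ ξ' : Heis n} (hx : ∀ i, |ξ.1 i| ≤ R)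
    (hy : ∀ i, |ξ.2.1 i| ≤ R) (hd1 : hd (Hmul (Hinv ξ) ξ') ≤ 1) :
    ‖ξ - ξ'‖ ≤ (1 + 4 * n * R) * hd (Hmul (Hinv ξ) ξ') := by
  set η := Hmul (Hinv ξ) ξ' with hη
  have hd0 := hd_nonneg η
  have ex : ∀ i, ξ'.1 i - ξ.1 i = η.1 i := fun i => by simp [hη, Hmul, Hinv]; ring
  have ey : ∀ i, ξ'.2.1 i - ξ.2.1 i = η.2.1 i := fun i => by simp [hη, Hmul, Hinv]; ring
  have et : ξ'.2.2 - ξ.2.2 =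
      η.2.2 + 2 * (∑ i, ξ.2.1 i * η.1 i) - 2 * (∑ i, ξ.1 i * η.2.1 i) := by
    simp only [hη, Hmul, Hinv, Pi.add_apply, Pi.neg_apply, neg_mul, Finset.sum_neg_distrib,
      mul_add, Finset.sum_add_distrib, mul_neg]
    rw [Finset.sum_congr rfl fun i _ => mul_comm (ξ.2.1 i) (ξ.1 i)]
    ring
  have sum_le : ∀ a b : Fin n → ℝ, (∀ i, |a i| ≤ R) → (∀ i, |b i| ≤ hd η) →
      |∑ i, a i * b i| ≤ n * R * hd η := by
    intro a b ha hb
    calc |∑ i, a i * b i| ≤ ∑ i : Fin n, |a i * b i| := Finset.abs_sum_le_sum_abs _ _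
      _ ≤ ∑ _i : Fin n, R * hd η := Finset.sum_le_sum fun i _ => by
          rw [abs_mul]; exact mul_le_mul (ha i) (hb i) (abs_nonneg _) hR
      _ = n * R * hd η := by simp; ring
  have h1 := sum_le _ _ hy (abs_x_le_hd η)
  have h2 := sum_le _ _ hx (abs_y_le_hd η)
  have h3 := abs_t_le_hd η
  have h4 : hd η ^ 2 ≤ hd η := by nlinarith
  have h5 : hd η ≤ (1 + 4 * n * R) * hd η := by
    have : 0 ≤ 4 * n * R * hd η := by positivity
    nlinarith
  rw [← norm_neg, neg_sub]
  refine norm_prod_le_iff.2 ⟨?_, norm_prod_le_iff.2 ⟨?_, ?_⟩⟩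
  · refine (pi_norm_le_iff_of_nonneg (by positivity)).2 fun i => ?_
    rw [Prod.fst_sub, Pi.sub_apply, ex, Real.norm_eq_abs]
    exact (abs_x_le_hd η i).trans h5
  · refine (pi_norm_le_iff_of_nonneg (by positivity)).2 fun i => ?_
    rw [Prod.snd_sub, Prod.fst_sub, Pi.sub_apply, ey, Real.norm_eq_abs]
    exact (abs_y_le_hd η i).trans h5
  · rw [Prod.snd_sub, Prod.snd_sub, et, Real.norm_eq_abs]
    rw [abs_le] at h1 h2 h3 ⊢
    constructor <;> nlinarith

/-- The truncated power is Lipschitz for the gauge at a positive distance from `x₁ = 0`. -/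
lemma near_bound {n : ℕ} (hn : 1 ≤ n) {p q β δ R : ℝ} (hp : 1 < p) (hq0 : 0 < q) (hqp : q ≤ p)
    (hδ : 0 < δ) (hR : 0 ≤ R) {ψ : Heis n → ℝ} {L : NNReal} (hψL : LipschitzWith L ψ)
    (hψ0 : ∀ ξ, 0 ≤ ψ ξ) (hψle1 : ∀ ξ, ψ ξ ≤ 1) :
    ∃ C : ℝ, 0 ≤ C ∧ ∀ ξ : Heis n, (∀ i, |ξ.1 i| ≤ R) → (∀ i, |ξ.2.1 i| ≤ R) → δ ≤ x1 ξ →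
      ∀ ξ', (x1 ξ, x1 ξ') ∉ trunc (1 / 2) →
        |prof β (x1 ξ) * ψ ξ - prof β (x1 ξ') * ψ ξ'| ^ p ≤ C * hd (Hmul (Hinv ξ) ξ') ^ q := by
  -- Off `trunc (1/2)` the ratio of the two heights is less than `2`, so both lie in `[δ/2, 2R]`.
  obtain ⟨L1, hL1, hlip⟩ := lip_rpow β (l := δ / 2) (u := 2 * R) (by linarith)
  set M : ℝ := (δ / 2) ^ β + L1 * (2 * R) with hM
  have hM0 : 0 ≤ M := by positivity
  set A : ℝ := L1 + M * (L * (1 + 4 * n * R)) with hA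
  have hA0 : 0 ≤ A := by positivity
  refine ⟨A ^ p + M ^ p, by positivity, fun ξ hx hy hδξ ξ' ht => ?_⟩
  simp only [trunc, Set.mem_ofPred_eq, not_or, not_le] at ht
  have hxR : x1 ξ ≤ R := by
    have := (abs_le.1 (hx ⟨0, hn⟩)).2
    rwa [x1, dif_pos (show 0 < n from hn)]
  have m1 : x1 ξ ∈ Set.Icc (δ / 2) (2 * R) := ⟨by linarith, by linarith⟩
  have m2 : x1 ξ' ∈ Set.Icc (δ / 2) (2 * R) := ⟨by linarith, by linarith⟩
  have p1 : prof β (x1 ξ) = x1 ξ ^ β := if_pos (by linarith)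
  have p2 : prof β (x1 ξ') = x1 ξ' ^ β := if_pos (by linarith [m2.1])
  have hb : ∀ a ∈ Set.Icc (δ / 2) (2 * R), a ^ β ≤ M := by
    intro a ha
    have h := (abs_le.1 (hlip a ha (δ / 2) ⟨le_rfl, ha.1.trans ha.2⟩)).2
    have h' : L1 * |a - δ / 2| ≤ L1 * (2 * R) := by
      gcongr
      rw [abs_of_nonneg (by linarith [ha.1])]
      linarith [ha.2]
    linarith
  have b1 := hb _ m1
  have b2 := hb _ m2
  have n1 : 0 ≤ x1 ξ ^ β := by rw [← p1]; exact prof_nonneg _ _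
  have n2 : 0 ≤ x1 ξ' ^ β := by rw [← p2]; exact prof_nonneg _ _
  rw [p1, p2]
  set d := hd (Hmul (Hinv ξ) ξ') with hd_def
  have hd0 : 0 ≤ d := hd_nonneg _
  have hAp : 0 ≤ A ^ p := by positivity
  have hMp : 0 ≤ M ^ p := by positivity
  have hdq : 0 ≤ d ^ q := by positivity
  rcases le_total d 1 with h1 | h1
  · have hx1 : |x1 ξ - x1 ξ'| ≤ d := by
      have e : x1 ξ - x1 ξ' = -(Hmul (Hinv ξ) ξ').1 ⟨0, hn⟩ := by
        simp only [x1, dif_pos (show 0 < n from hn), Hmul, Hinv, Pi.add_apply, Pi.neg_apply]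
        ring
      rw [e, abs_neg]
      exact abs_x_le_hd _ _
    have hψd : |ψ ξ - ψ ξ'| ≤ L * (1 + 4 * n * R) * d := by
      have := hψL.dist_le_mul ξ ξ'
      rw [Real.dist_eq, dist_eq_norm] at this
      refine this.trans ?_
      rw [mul_assoc]
      exact mul_le_mul_of_nonneg_left (norm_sub_le_hd hR hx hy h1) L.2
    have key : |x1 ξ ^ β * ψ ξ - x1 ξ' ^ β * ψ ξ'| ≤ A * d := by
      calc |x1 ξ ^ β * ψ ξ - x1 ξ' ^ β * ψ ξ'|
          = |(x1 ξ ^ β - x1 ξ' ^ β) * ψ ξ + x1 ξ' ^ β * (ψ ξ - ψ ξ')| := by congr 1; ring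
        _ ≤ |x1 ξ ^ β - x1 ξ' ^ β| * ψ ξ + x1 ξ' ^ β * |ψ ξ - ψ ξ'| := by
            refine (abs_add_le _ _).trans_eq ?_
            rw [abs_mul, abs_mul, abs_of_nonneg (hψ0 ξ), abs_of_nonneg n2]
        _ ≤ (L1 * d) * 1 + M * (L * (1 + 4 * n * R) * d) := by
            refine add_le_add (mul_le_mul ?_ (hψle1 ξ) (hψ0 ξ) (by positivity))
              (mul_le_mul b2 hψd (abs_nonneg _) hM0)
            exact (hlip _ m1 _ m2).trans (mul_le_mul_of_nonneg_left hx1 hL1)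
        _ = A * d := by rw [hA]; ring
    calc _ ≤ (A * d) ^ p := Real.rpow_le_rpow (abs_nonneg _) key (by linarith)
      _ = A ^ p * d ^ p := Real.mul_rpow hA0 hd0
      _ ≤ A ^ p * d ^ q := mul_le_mul_of_nonneg_left
          (Real.rpow_le_rpow_of_exponent_ge' hd0 h1 hq0.le hqp) hAp
      _ ≤ _ := by nlinarith [mul_nonneg hMp hdq]
  · have key : |x1 ξ ^ β * ψ ξ - x1 ξ' ^ β * ψ ξ'| ≤ M := by
      have u1 : x1 ξ ^ β * ψ ξ ≤ M * 1 := mul_le_mul b1 (hψle1 _) (hψ0 _) hM0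
      have u2 : x1 ξ' ^ β * ψ ξ' ≤ M * 1 := mul_le_mul b2 (hψle1 _) (hψ0 _) hM0
      have v1 := mul_nonneg n1 (hψ0 ξ)
      have v2 := mul_nonneg n2 (hψ0 ξ')
      rw [abs_le]
      constructor <;> linarith
    have h2 : 1 ≤ d ^ q := Real.one_le_rpow h1 hq0.le
    calc _ ≤ M ^ p := Real.rpow_le_rpow (abs_nonneg _) key (by linarith)
      _ ≤ _ := by nlinarith [mul_nonneg hAp hdq]

lemma continuous_x1 {n : ℕ} (hn : 1 ≤ n) : Continuous (x1 : Heis n → ℝ) := by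
  have : (x1 : Heis n → ℝ) = fun ξ => ξ.1 ⟨0, hn⟩ := by
    ext ξ; rw [x1, dif_pos (show 0 < n from hn)]
  rw [this]; fun_prop

/-! ### The supersolution inequality -/

/-- Theorem 5.7: `u_{β,R₀}` is a weak supersolution of
`𝓛u = λ J_p(u)/x₁^{sp+α}` on `D_{R₀} ∩ ℍⁿ₊` with `λ = C_{n,s,p,α} λ(β, s+α/p, p)`. -/
theorem truncated_power_supersolution (n : ℕ) (hn : 1 ≤ n) (p s α : ℝ)
    (hp1 : 1 < p) (hs0 : 0 < s) (hs1 : s < 1)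
    (hα0 : 0 ≤ α) (hαQ : α < hQ n - 2) (hαp : α < p * (1 - s))
    (R₀ : ℝ) (hR₀ : 0 < R₀) (β : ℝ)
    (hβl : -(1 / (p - 1)) < β) (hβu : β < (s * p + α) / (p - 1))
    (ψ : Heis n → ℝ) (hψsm : ContDiff ℝ (⊤ : ℕ∞) ψ) (hψc : HasCompactSupport ψ)
    (hψsupp : tsupport ψ ⊆ boxDt n (R₀ + 1))
    (hψ0 : ∀ ξ, 0 ≤ ψ ξ) (hψle1 : ∀ ξ, ψ ξ ≤ 1)
    (hψ1 : ∀ ξ ∈ boxD n R₀, ψ ξ = 1)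
    (C₀ : ℝ) (hC₀ : 0 < C₀)
    (hdx : ∀ (ξ : Heis n) (i : Fin n), |fderiv ℝ ψ ξ (Pi.single i 1, 0, 0)| ≤ C₀)
    (hdy : ∀ (ξ : Heis n) (i : Fin n), |fderiv ℝ ψ ξ (0, Pi.single i 1, 0)| ≤ C₀)
    (hdt : ∀ ξ : Heis n, |fderiv ℝ ψ ξ (0, 0, 1)| ≤ C₀ / (R₀ + 1)) :
    ∀ φ : Heis n → ℝ, MemW n p s α Set.univ φ → (∀ ξ, 0 ≤ φ ξ) →
      HasCompactSupport φ → tsupport φ ⊆ boxD n R₀ ∩ halfSpace n →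
      2 * sphereArea (2 * n - 1) * calI (2 * n) (s * p) α * lamGen p (s + α / p) β *
          (∫ ξ in halfSpace n,
            Jp p ((if 0 < x1 ξ then x1 ξ ^ β else 0) * ψ ξ) * φ ξ / x1 ξ ^ (s * p + α)) ≤
        ∫ ξ, ∫ ξ',
          Jp p ((if 0 < x1 ξ then x1 ξ ^ β else 0) * ψ ξ -
              (if 0 < x1 ξ' then x1 ξ' ^ β else 0) * ψ ξ') * (φ ξ - φ ξ') /
            (hd (Hmul (Hinv ξ) ξ') ^ (hQ n + s * p) * zdist ξ ξ' ^ α) := by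
  rintro φ ⟨hφm, hφp, hφg⟩ hφ0 hφc hφsupp
  have hp0 : 0 < p := by linarith
  have hp10 : 0 < p - 1 := by linarith
  have hθ : 0 < s * p := by positivity
  have hSp : s * p + α < p := by nlinarith
  have hS0 : (s + α / p) * p = s * p + α := by field_simp
  have h1 : -1 < β * (p - 1) := by
    have := mul_lt_mul_of_pos_right hβl hp10
    rwa [neg_mul, one_div, inv_mul_cancel₀ hp10.ne'] at this
  have h2 : β * (p - 1) < s * p + α := (lt_div_iff₀ hp10).1 hβu
  set u : Heis n → ℝ := fun ξ => prof β (x1 ξ) * ψ ξ with hu_def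
  have hψm : Measurable ψ := hψsm.continuous.measurable
  have hum : Measurable u := by rw [hu_def]; fun_prop
  have hu0 : ∀ ξ, 0 ≤ u ξ := fun ξ => mul_nonneg (prof_nonneg _ _) (hψ0 ξ)
  have hu : ∀ ξ, u ξ ≤ prof β (x1 ξ) := fun ξ =>
    mul_le_of_le_one_right (prof_nonneg _ _) (hψle1 ξ)
  have hφK : ∀ ξ, φ ξ ≠ 0 → ξ ∈ tsupport φ := fun ξ h => subset_tsupport φ h
  have huφ : ∀ ξ, φ ξ ≠ 0 → u ξ = prof β (x1 ξ) := fun ξ h => by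
    rw [hu_def]; simp only
    rw [hψ1 ξ (hφsupp (hφK ξ h)).1, mul_one]
  have hK : IsCompact (tsupport φ) := hφc
  -- The support of `φ` stays at a positive distance from the boundary of the half-space.
  obtain ⟨δ, hδ, hδK⟩ : ∃ δ : ℝ, 0 < δ ∧ ∀ ξ ∈ tsupport φ, δ ≤ x1 ξ := by
    rcases (tsupport φ).eq_empty_or_nonempty with h | h
    · exact ⟨1, one_pos, fun ξ hξ => by rw [h] at hξ; exact hξ.elim⟩
    · obtain ⟨ξ₀, h0, hmin⟩ := hK.exists_isMinOn h (continuous_x1 hn).continuousOn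
      exact ⟨x1 ξ₀, (hφsupp h0).2, fun ξ hξ => hmin hξ⟩
  have hRK : ∀ ξ ∈ tsupport φ, x1 ξ ≤ R₀ := by
    intro ξ hξ
    have := (abs_le.1 ((hφsupp hξ).1.1 ⟨0, hn⟩)).2
    rwa [x1, dif_pos (show 0 < n from hn)]
  have hφs : ∀ ξ, φ ξ ≠ 0 → δ ≤ x1 ξ ∧ x1 ξ ≤ R₀ := fun ξ h =>
    ⟨hδK ξ (hφK ξ h), hRK ξ (hφK ξ h)⟩
  rw [Measure.restrict_univ] at hφp
  have hφpi : Integrable (fun ξ => |φ ξ| ^ p) :=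
    ⟨by apply Measurable.aestronglyMeasurable; fun_prop,
      (hasFiniteIntegral_iff_ofReal (ae_of_all _ fun _ => by positivity)).2 hφp⟩
  have hφi : Integrable φ := by
    have hKi : Integrable ((tsupport φ).indicator (fun _ => (1 : ℝ))) :=
      (integrable_indicator_iff hK.isClosed.measurableSet).2
        (integrableOn_const hK.measure_lt_top.ne)
    refine (hKi.add hφpi).mono' hφm.aestronglyMeasurable (ae_of_all _ fun ξ => ?_)
    simp only [Pi.add_apply]
    rw [Real.norm_eq_abs]
    have hpos : 0 ≤ |φ ξ| ^ p := by positivity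
    by_cases h : φ ξ = 0
    · rw [h, abs_zero, Real.zero_rpow hp0.ne', add_zero]
      exact Set.indicator_nonneg (fun _ _ => zero_le_one) _
    rw [Set.indicator_of_mem (hφK ξ h)]
    rcases le_total |φ ξ| 1 with h' | h'
    · linarith
    · have := Real.rpow_le_rpow_of_exponent_le h' hp1.le
      rw [Real.rpow_one] at this
      linarith
  have hφgi : Integrable (fun r : Heis n × Heis n => |φ r.1 - φ r.2| ^ p * kpair (s * p) α r) := by
    refine ⟨by apply Measurable.aestronglyMeasurable; fun_prop, ?_⟩
    rw [hasFiniteIntegral_iff_ofReal (ae_of_all _ fun r =>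
      mul_nonneg (by positivity) (kpair_nonneg _ _ _)), Measure.volume_eq_prod,
      lintegral_prod _ (by fun_prop)]
    simp only [gagSem, Measure.restrict_univ, div_eq_mul_one_div (|_| ^ p)] at hφg
    exact hφg
  -- `q ≤ p` for the Lipschitz bound, `q > sp+α` for convergence at the diagonal, and the other two
  -- bounds keep the marginal formula valid for the kernel of order `sp - q`.
  obtain ⟨q, hq1, hq2⟩ : ∃ q, s * p + α < q ∧ q < min (min p (s * p + α + 1)) (s * p + 2 * n) := by
    apply exists_between
    rw [lt_min_iff, lt_min_iff]
    unfold hQ at hαQ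
    exact ⟨⟨hSp, by linarith⟩, by linarith⟩
  rw [lt_min_iff, lt_min_iff] at hq2
  obtain ⟨⟨hqp, hq2⟩, hq3⟩ := hq2
  obtain ⟨L, hL⟩ : ∃ L, LipschitzWith L ψ :=
    ContDiff.lipschitzWith_of_hasCompactSupport hψc hψsm (by simp)
  obtain ⟨C, hC, hnear⟩ := near_bound (β := β) hn hp1 (by linarith) hqp.le hδ hR₀.le hL hψ0 hψle1
  have hW := integrable_near hn hθ hα0 hq1 hq2 hq3 hC hum hK
    (fun ξ hξ => ⟨(hφsupp hξ).2, hRK ξ hξ⟩)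
    (fun ξ hξ => hnear ξ (hφsupp hξ).1.1 (hφsupp hξ).1.2.1 (hδK ξ hξ))
  have hF := integrable_wform hn hp1 hθ hα0 h1 h2 hδ hφm hφ0 hφi hφs hum hu0 hu hφK hW hφgi
  have main := core_le hn hp1 hθ hα0 hSp hS0 h1 h2 hδ hφm hφ0 hφi hφs hum hu0 hu huφ hF
  have eL : ∫ ξ in halfSpace n,
      Jp p ((if 0 < x1 ξ then x1 ξ ^ β else 0) * ψ ξ) * φ ξ / x1 ξ ^ (s * p + α) =
      ∫ ξ, φ ξ * x1 ξ ^ (β * (p - 1) - (s * p + α)) := by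
    rw [setIntegral_eq_integral_of_forall_compl_eq_zero]
    · refine integral_congr_ae (ae_of_all _ fun ξ => ?_)
      simp only
      by_cases h : φ ξ = 0
      · simp [h]
      have hx : 0 < x1 ξ := hδ.trans_le (hφs ξ h).1
      have e : (if 0 < x1 ξ then x1 ξ ^ β else 0) * ψ ξ = x1 ξ ^ β := by
        rw [hψ1 ξ (hφsupp (hφK ξ h)).1, mul_one, if_pos hx]
      rw [e, Jp_of_nonneg hp1 (by positivity), ← Real.rpow_mul hx.le, Real.rpow_sub hx]
      ring
    · intro ξ hξ
      have : φ ξ = 0 := by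
        by_contra h
        exact hξ (hφsupp (hφK ξ h)).2
      simp [this]
  have eP : ∫ q : Heis n × Heis n, wform p (s * p) α u φ q =
      ∫ ξ, ∫ ξ', wform p (s * p) α u φ (ξ, ξ') :=
    integral_prod (μ := (volume : Measure (Heis n))) (ν := (volume : Measure (Heis n))) _ hF
  rw [eP] at main
  rw [eL]
  refine main.trans_eq ?_
  congr 1; ext ξ
  congr 1; ext ξ'
  simp only [wform, kpair, kern, hu_def, prof, zdist]
  rw [← div_eq_mul_one_div]
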